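/- arXiv:2106.03227 — 4 statements merged into one kernel-verified Lean document; each statement's English description precedes it below -/
import Mathlib

section
/- (Theorem 3.3, Type-I error part, full bootstrap.) Assume the null hypothesis p = q. Let α_level ∈ (0,1), define λ₁ = √(8 log(4/α_level)) and the threshold t_thres = 4 λ₁ √(ν/(c_a n)). If n > λ₁²/(9 ν c_a), then the probability (under the joint product law of the four samples) that T̂_a > t_thres is at most α_level. -/
open MeasureTheory Real
open scoped BigOperators ENNReal

/-- The asymmetric empirical MMD statistic `T̂_a` of kernel `K`, computed between the
training sample `dtr = (X₍₁₎, Y₍₁₎)` and the test sample `dte = (X₍₂₎, Y₍₂₎)`. -/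
noncomputable def asymMMD {𝒳 : Type*} (K : 𝒳 → 𝒳 → ℝ) (n1X n1Y n2X n2Y : ℕ)
    (dtr : (Fin n1X → 𝒳) × (Fin n1Y → 𝒳))
    (dte : (Fin n2X → 𝒳) × (Fin n2Y → 𝒳)) : ℝ :=
  (1/((n2X:ℝ)*(n1X:ℝ))) * ∑ i, ∑ j, K (dte.1 i) (dtr.1 j)
  - (1/((n2X:ℝ)*(n1Y:ℝ))) * ∑ i, ∑ j, K (dte.1 i) (dtr.2 j)
  - (1/((n2Y:ℝ)*(n1X:ℝ))) * ∑ i, ∑ j, K (dte.2 i) (dtr.1 j)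
  + (1/((n2Y:ℝ)*(n1Y:ℝ))) * ∑ i, ∑ j, K (dte.2 i) (dtr.2 j)

/-!
Under `p = q`, `T̂_a` is a signed sum of four two-sample means of `K`, each with expectation
`E K`, so these expectations cancel and a union bound reduces the claim to one two-sample mean
exceeding its expectation. If `k ≤ l`, the mean of `f (x i, y j)` over all `k * l` pairs is the
average, over the `l` cyclic shifts of `y`, of means over `k` disjoint, hence independent, pairs.
By convexity of `exp` its moment generating function is at most that of a mean of `k` independent
copies of `f`, and a Bernstein-type estimate together with Chernoff's bound gives the tail.
-/

section

open ProbabilityTheory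

section Probability

variable {Ω : Type*} {mΩ : MeasurableSpace Ω} {μ : Measure Ω}

theorem integrable_exp_mul_of_forall_abs_le [IsFiniteMeasure μ] {Z : Ω → ℝ} {M : ℝ}
    (hZ : Measurable Z) (hZM : ∀ ω, |Z ω| ≤ M) (s : ℝ) :
    Integrable (fun ω => exp (s * Z ω)) μ :=
  integrable_exp_mul_of_mem_Icc hZ.aemeasurable (.of_forall fun ω => abs_le.1 (hZM ω))

theorem ae_eq_zero_of_integral_sq_le_zero {Z : Ω → ℝ} (hZ : MemLp Z 2 μ)
    (hZ0 : ∫ ω, Z ω ^ 2 ∂μ ≤ 0) : Z =ᵐ[μ] 0 := by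
  have hzero : ∫ ω, Z ω ^ 2 ∂μ = 0 := hZ0.antisymm (integral_nonneg fun _ => sq_nonneg _)
  filter_upwards [(integral_eq_zero_iff_of_nonneg (fun _ => sq_nonneg _) hZ.integrable_sq).1 hzero]
    with ω hω
  exact pow_eq_zero_iff two_ne_zero |>.1 hω

theorem measureReal_preimage_le {Ω' : Type*} [MeasurableSpace Ω'] {Q : Measure Ω'}
    [IsFiniteMeasure Q] {φ : Ω → Ω'} (hφ : MeasurePreserving φ μ Q) (s : Set Ω') :
    μ.real (φ ⁻¹' s) ≤ Q.real s :=
  ENNReal.toReal_mono (measure_ne_top Q s) (hφ.measure_preimage_le s)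

theorem mgf_sum_mul_le {ι : Type*} {s : Finset ι} {w : ι → ℝ} {Z : ι → Ω → ℝ} {t : ℝ}
    (hw : ∀ i ∈ s, 0 ≤ w i) (hw1 : ∑ i ∈ s, w i = 1)
    (hint : ∀ i ∈ s, Integrable (fun ω => exp (t * Z i ω)) μ) :
    mgf (fun ω => ∑ i ∈ s, w i * Z i ω) μ t ≤ ∑ i ∈ s, w i * mgf (Z i) μ t := by
  have hint' : ∀ i ∈ s, Integrable (fun ω => w i * exp (t * Z i ω)) μ :=
    fun i hi => (hint i hi).const_mul _
  have hjensen : ∀ ω, exp (t * ∑ i ∈ s, w i * Z i ω) ≤ ∑ i ∈ s, w i * exp (t * Z i ω) := by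
    intro ω
    have := convexOn_exp.map_sum_le (p := fun i => t * Z i ω) hw hw1 fun _ _ => Set.mem_univ _
    simpa only [smul_eq_mul, Finset.mul_sum, mul_left_comm t] using this
  calc mgf (fun ω => ∑ i ∈ s, w i * Z i ω) μ t
      ≤ ∫ ω, ∑ i ∈ s, w i * exp (t * Z i ω) ∂μ :=
        integral_mono_of_nonneg (.of_forall fun _ => (exp_pos _).le)
          (integrable_finsetSum s hint') (.of_forall hjensen)
    _ = ∑ i ∈ s, w i * mgf (Z i) μ t := by
        simp only [integral_finsetSum s hint', integral_const_mul, mgf]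

theorem measureReal_card_mul_lt_sum_le [IsFiniteMeasure μ] {ι : Type*} (s : Finset ι)
    (Z : ι → Ω → ℝ) (t : ℝ) :
    μ.real {ω | s.card * t < ∑ i ∈ s, Z i ω} ≤ ∑ i ∈ s, μ.real {ω | t < Z i ω} := by
  have hsub : {ω | s.card * t < ∑ i ∈ s, Z i ω} ⊆ ⋃ i ∈ s, {ω | t < Z i ω} := by
    intro ω hω
    have hlt : ∑ _i ∈ s, t < ∑ i ∈ s, Z i ω := by simpa using hω
    simpa using Finset.exists_lt_of_sum_lt hlt
  exact (measureReal_mono hsub (measure_ne_top _ _)).trans (measureReal_biUnion_finset_le s _)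

variable [IsProbabilityMeasure μ]

theorem mgf_le_exp_sq_mul_integral_sq {Z : Ω → ℝ} {M u : ℝ} (hZ : AEMeasurable Z μ)
    (hZM : ∀ᵐ ω ∂μ, |Z ω| ≤ M) (hZ0 : ∫ ω, Z ω ∂μ = 0) (hu : |u| * M ≤ 1) :
    mgf Z μ u ≤ exp (u ^ 2 * ∫ ω, Z ω ^ 2 ∂μ) := by
  have hZIcc : ∀ᵐ ω ∂μ, Z ω ∈ Set.Icc (-M) M := hZM.mono fun ω => abs_le.1
  have hZ2 : MemLp Z 2 μ := memLp_of_bounded hZIcc hZ.aestronglyMeasurable 2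
  have hint : Integrable (fun ω => u * Z ω) μ := (hZ2.integrable one_le_two).const_mul u
  have hint_sq : Integrable (fun ω => u ^ 2 * Z ω ^ 2) μ := hZ2.integrable_sq.const_mul _
  have hint_lin : Integrable (fun ω => 1 + u * Z ω) μ := (integrable_const 1).add hint
  have hexp_le : ∀ᵐ ω ∂μ, exp (u * Z ω) ≤ 1 + u * Z ω + u ^ 2 * Z ω ^ 2 := by
    filter_upwards [hZM] with ω hω
    have habs : |u * Z ω| ≤ 1 := by
      rw [abs_mul]
      exact (mul_le_mul_of_nonneg_left hω (abs_nonneg u)).trans hu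
    linarith [(abs_le.1 (Real.abs_exp_sub_one_sub_id_le habs)).2, mul_pow u (Z ω) 2]
  calc mgf Z μ u ≤ ∫ ω, (1 + u * Z ω + u ^ 2 * Z ω ^ 2) ∂μ :=
        integral_mono_ae (integrable_exp_mul_of_mem_Icc hZ hZIcc) (hint_lin.add hint_sq) hexp_le
    _ = u ^ 2 * ∫ ω, Z ω ^ 2 ∂μ + 1 := by
        rw [integral_add hint_lin hint_sq, integral_add (integrable_const 1) hint,
          integral_const_mul, integral_const_mul, hZ0]
        simp [add_comm]
    _ ≤ exp (u ^ 2 * ∫ ω, Z ω ^ 2 ∂μ) := add_one_le_exp _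

theorem integral_sub_integral_sq_le {Z : Ω → ℝ} (hZ : AEStronglyMeasurable Z μ) :
    ∫ ω, (Z ω - ∫ ω', Z ω' ∂μ) ^ 2 ∂μ ≤ ∫ ω, Z ω ^ 2 ∂μ :=
  (variance_eq_integral hZ.aemeasurable).symm.trans_le (variance_le_expectation_sq hZ)

end Probability

section Pairing

variable {ι κ X Y : Type*} [Fintype ι] [Fintype κ] [MeasurableSpace X] [MeasurableSpace Y]

theorem measurePreserving_comp_of_injective (ρ : Measure Y) [IsProbabilityMeasure ρ]
    {σ : ι → κ} (hσ : Function.Injective σ) :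
    MeasurePreserving (fun y : κ → Y => y ∘ σ) (Measure.pi fun _ => ρ)
      (Measure.pi fun _ => ρ) := by
  refine ⟨by fun_prop, ?_⟩
  have hindep : iIndepFun (fun (i : ι) (y : κ → Y) => y (σ i)) (Measure.pi fun _ => ρ) :=
    (iIndepFun_pi (X := fun (_ : κ) (y : Y) => y) fun _ => aemeasurable_id).precomp hσ
  have hmarginal : ∀ i, (Measure.pi fun _ : κ => ρ).map (fun y => y (σ i)) = ρ :=
    fun i => (measurePreserving_eval (fun _ : κ => ρ) (σ i)).map_eq
  have hmap := (iIndepFun_iff_map_fun_eq_pi_map fun i =>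
    (measurable_pi_apply (σ i)).aemeasurable).1 hindep
  simp only [hmarginal] at hmap
  exact hmap

theorem measurePreserving_pairing (μ : Measure X) (ρ : Measure Y) [IsProbabilityMeasure μ]
    [IsProbabilityMeasure ρ] {σ : ι → κ} (hσ : Function.Injective σ) :
    MeasurePreserving (fun (z : (ι → X) × (κ → Y)) i => (z.1 i, z.2 (σ i)))
      ((Measure.pi fun _ => μ).prod (Measure.pi fun _ => ρ))
      (Measure.pi fun _ => μ.prod ρ) :=
  (measurePreserving_arrowProdEquivProdArrow X Y ι (fun _ => μ) (fun _ => ρ)).symm.comp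
    ((MeasurePreserving.id _).prod (measurePreserving_comp_of_injective ρ hσ))

theorem mgf_matched_mean (μ : Measure X) (ρ : Measure Y) [IsProbabilityMeasure μ]
    [IsProbabilityMeasure ρ] {f : X × Y → ℝ} (hf : Measurable f) {σ : ι → κ}
    (hσ : Function.Injective σ) (a s : ℝ) :
    mgf (fun z : (ι → X) × (κ → Y) => a * ∑ i, f (z.1 i, z.2 (σ i)))
      ((Measure.pi fun _ => μ).prod (Measure.pi fun _ => ρ)) s
      = mgf f (μ.prod ρ) (a * s) ^ Fintype.card ι := by
  have hpair := measurePreserving_pairing μ ρ hσ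
  calc mgf (fun z : (ι → X) × (κ → Y) => a * ∑ i, f (z.1 i, z.2 (σ i)))
        ((Measure.pi fun _ => μ).prod (Measure.pi fun _ => ρ)) s
      = mgf (fun z : ι → X × Y => ∑ i, f (z i)) (Measure.pi fun _ => μ.prod ρ) (a * s) := by
        have hmeas : Measurable fun z : ι → X × Y => exp (a * s * ∑ i, f (z i)) := by fun_prop
        rw [mgf_const_mul, ← hpair.map_eq, mgf_map hpair.aemeasurable hmeas.aestronglyMeasurable]
        rfl
    _ = mgf f (μ.prod ρ) (a * s) ^ Fintype.card ι := by
        simp only [mgf, Finset.mul_sum, exp_sum]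
        exact integral_fintype_prod_eq_pow fun z => exp (a * s * f z)

end Pairing

/-- The mean of `f` over all pairs formed from the samples `x` and `y`: the two-sample `V`-statistic
of `f`. It is `0` when a sample is empty. -/
noncomputable def pairMean {X Y : Type*} (f : X × Y → ℝ) {k l : ℕ} (x : Fin k → X)
    (y : Fin l → Y) : ℝ :=
  1 / ((k : ℝ) * l) * ∑ i, ∑ j, f (x i, y j)

section Algebra

variable {X Y : Type*} {k l : ℕ}

theorem pairMean_comp_swap (f : X × Y → ℝ) (x : Fin k → X) (y : Fin l → Y) :
    pairMean (f ∘ Prod.swap) y x = pairMean f x y := by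
  unfold pairMean
  rw [mul_comm (l : ℝ), Finset.sum_comm]
  rfl

theorem pairMean_neg (f : X × Y → ℝ) (x : Fin k → X) (y : Fin l → Y) :
    pairMean (fun z => -f z) x y = -pairMean f x y := by
  simp only [pairMean, Finset.sum_neg_distrib, mul_neg]

theorem pairMean_sub_const [NeZero k] [NeZero l] (f : X × Y → ℝ) (c : ℝ) (x : Fin k → X)
    (y : Fin l → Y) : pairMean (fun z => f z - c) x y = pairMean f x y - c := by
  have hk : (k : ℝ) ≠ 0 := NeZero.ne _
  have hl : (l : ℝ) ≠ 0 := NeZero.ne _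
  simp only [pairMean, Finset.sum_sub_distrib, Finset.sum_const, Finset.card_univ,
    Fintype.card_fin, nsmul_eq_mul]
  field_simp

theorem abs_mean_le {n : ℕ} [NeZero n] {g : Fin n → ℝ} {M : ℝ} (hg : ∀ i, |g i| ≤ M) :
    |1 / (n : ℝ) * ∑ i, g i| ≤ M := by
  have hn : (0 : ℝ) < n := by exact_mod_cast NeZero.pos n
  have hsum : |∑ i, g i| ≤ n * M :=
    (Finset.abs_sum_le_sum_abs _ _).trans <|
      (Finset.sum_le_card_nsmul _ _ M fun i _ => hg i).trans_eq (by simp)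
  rwa [abs_mul, abs_of_pos (one_div_pos.2 hn), one_div, inv_mul_le_iff₀ hn]

theorem abs_pairMean_le [NeZero k] [NeZero l] {f : X × Y → ℝ} {M : ℝ} (hf : ∀ z, |f z| ≤ M)
    (x : Fin k → X) (y : Fin l → Y) : |pairMean f x y| ≤ M := by
  have hiter : pairMean f x y = 1 / (k : ℝ) * ∑ i, (1 / (l : ℝ) * ∑ j, f (x i, y j)) := by
    rw [pairMean, ← Finset.mul_sum, ← mul_assoc, one_div_mul_one_div]
  rw [hiter]
  exact abs_mean_le fun i => abs_mean_le fun j => hf _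

/-- The `c`-th cyclic shift pairs the indices of the shorter sample with distinct indices of the
longer one; as `c` varies, every pair of indices is hit exactly once. -/
def cyclicShift (hkl : k ≤ l) (c : Fin l) (i : Fin k) : Fin l :=
  c + Fin.castLE hkl i

theorem cyclicShift_injective [NeZero l] (hkl : k ≤ l) (c : Fin l) :
    Function.Injective (cyclicShift hkl c) :=
  fun _ _ h => Fin.castLE_injective hkl (add_left_cancel h)

theorem pairMean_eq_sum_cyclicShift [NeZero l] (hkl : k ≤ l) (f : X × Y → ℝ) (x : Fin k → X)
    (y : Fin l → Y) :
    pairMean f x y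
      = ∑ c, 1 / (l : ℝ) * (1 / (k : ℝ) * ∑ i, f (x i, y (cyclicShift hkl c i))) := by
  have hshift : ∀ i, ∑ c, f (x i, y (cyclicShift hkl c i)) = ∑ j, f (x i, y j) := fun i =>
    Equiv.sum_comp (Equiv.addRight (Fin.castLE hkl i)) fun j => f (x i, y j)
  calc pairMean f x y
      = 1 / (l : ℝ) * (1 / (k : ℝ) * ∑ i, ∑ c, f (x i, y (cyclicShift hkl c i))) := by
        simp only [pairMean, hshift, one_div, mul_inv]
        ring
    _ = ∑ c, 1 / (l : ℝ) * (1 / (k : ℝ) * ∑ i, f (x i, y (cyclicShift hkl c i))) := by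
        rw [Finset.sum_comm]
        simp only [Finset.mul_sum]

end Algebra

section Deviation

variable {X Y : Type*} [MeasurableSpace X] [MeasurableSpace Y] {μ : Measure X} {ρ : Measure Y}
  {f : X × Y → ℝ} {k l : ℕ} {M m s t v lam : ℝ}

theorem measurable_pairMean (hf : Measurable f) :
    Measurable fun z : (Fin k → X) × (Fin l → Y) => pairMean f z.1 z.2 := by
  unfold pairMean
  fun_prop

variable [IsProbabilityMeasure μ] [IsProbabilityMeasure ρ]

theorem mgf_pairMean_le_of_le [NeZero k] (hkl : k ≤ l) (hf : Measurable f)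
    (hfM : ∀ z, |f z| ≤ M) (hf0 : ∫ z, f z ∂(μ.prod ρ) = 0) (hs : |s| * M ≤ k) :
    mgf (fun z : (Fin k → X) × (Fin l → Y) => pairMean f z.1 z.2)
      ((Measure.pi fun _ => μ).prod (Measure.pi fun _ => ρ)) s
      ≤ exp (s ^ 2 * (∫ z, f z ^ 2 ∂(μ.prod ρ)) / k) := by
  have hk : (0 : ℝ) < k := by exact_mod_cast NeZero.pos k
  have : NeZero l := ⟨((NeZero.pos k).trans_le hkl).ne'⟩
  have hint : ∀ c ∈ Finset.univ, Integrable (fun z : (Fin k → X) × (Fin l → Y) =>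
      exp (s * (1 / (k : ℝ) * ∑ i, f (z.1 i, z.2 (cyclicShift hkl c i)))))
      ((Measure.pi fun _ => μ).prod (Measure.pi fun _ => ρ)) := fun c _ =>
    integrable_exp_mul_of_forall_abs_le (by fun_prop) (fun z => abs_mean_le fun i => hfM _) s
  have hu : |1 / (k : ℝ) * s| * M ≤ 1 := by
    rwa [abs_mul, abs_of_pos (one_div_pos.2 hk), mul_assoc, one_div, inv_mul_le_iff₀ hk, mul_one]
  calc mgf (fun z : (Fin k → X) × (Fin l → Y) => pairMean f z.1 z.2)
        ((Measure.pi fun _ => μ).prod (Measure.pi fun _ => ρ)) s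
      ≤ ∑ _c : Fin l, 1 / (l : ℝ) * mgf f (μ.prod ρ) (1 / k * s) ^ k := by
        simp only [pairMean_eq_sum_cyclicShift hkl]
        refine (mgf_sum_mul_le (fun _ _ => by positivity) (by simp) hint).trans_eq ?_
        simp only [mgf_matched_mean μ ρ hf (cyclicShift_injective hkl _), Fintype.card_fin]
    _ = mgf f (μ.prod ρ) (1 / k * s) ^ k := by
        rw [← Finset.sum_mul]
        simp
    _ ≤ exp ((1 / k * s) ^ 2 * ∫ z, f z ^ 2 ∂(μ.prod ρ)) ^ k := by
        gcongr
        · exact mgf_nonneg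
        · exact mgf_le_exp_sq_mul_integral_sq hf.aemeasurable (.of_forall hfM) hf0 hu
    _ = exp (s ^ 2 * (∫ z, f z ^ 2 ∂(μ.prod ρ)) / k) := by
        rw [← exp_nat_mul]
        congr 1
        field_simp

theorem mgf_pairMean_comp_swap :
    mgf (fun z : (Fin l → Y) × (Fin k → X) => pairMean (f ∘ Prod.swap) z.1 z.2)
      ((Measure.pi fun _ => ρ).prod (Measure.pi fun _ => μ)) s
      = mgf (fun z : (Fin k → X) × (Fin l → Y) => pairMean f z.1 z.2)
        ((Measure.pi fun _ => μ).prod (Measure.pi fun _ => ρ)) s := by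
  simp only [pairMean_comp_swap, mgf]
  exact integral_prod_swap fun z : (Fin k → X) × (Fin l → Y) => exp (s * pairMean f z.1 z.2)

theorem mgf_pairMean_le [NeZero k] [NeZero l] (hf : Measurable f) (hfM : ∀ z, |f z| ≤ M)
    (hf0 : ∫ z, f z ∂(μ.prod ρ) = 0) (hm : 0 < m) (hk : m ≤ k) (hl : m ≤ l)
    (hs : |s| * M ≤ m) :
    mgf (fun z : (Fin k → X) × (Fin l → Y) => pairMean f z.1 z.2)
      ((Measure.pi fun _ => μ).prod (Measure.pi fun _ => ρ)) s
      ≤ exp (s ^ 2 * (∫ z, f z ^ 2 ∂(μ.prod ρ)) / m) := by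
  have : 0 ≤ ∫ z, f z ^ 2 ∂(μ.prod ρ) := integral_nonneg fun z => sq_nonneg _
  rcases le_total k l with hkl | hlk
  · exact (mgf_pairMean_le_of_le hkl hf hfM hf0 (hs.trans hk)).trans (by gcongr)
  · have hf0' : ∫ z, (f ∘ Prod.swap) z ∂(ρ.prod μ) = 0 := (integral_prod_swap f).trans hf0
    have hsq' : ∫ z, (f ∘ Prod.swap) z ^ 2 ∂(ρ.prod μ) = ∫ z, f z ^ 2 ∂(μ.prod ρ) :=
      integral_prod_swap fun z => f z ^ 2
    rw [← mgf_pairMean_comp_swap]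
    refine (mgf_pairMean_le_of_le hlk (hf.comp measurable_swap) (fun z => hfM _) hf0'
      (hs.trans hl)).trans ?_
    rw [hsq']
    gcongr

theorem measureReal_le_pairMean_le (hf : Measurable f) (hfM : ∀ z, |f z| ≤ M)
    (hf0 : ∫ z, f z ∂(μ.prod ρ) = 0) (hv : 0 < v) (hfv : ∫ z, f z ^ 2 ∂(μ.prod ρ) ≤ v)
    (hm : 0 < m) (hk : m ≤ k) (hl : m ≤ l) (ht : 0 ≤ t) (htM : t * M ≤ 6 * v) :
    ((Measure.pi fun _ => μ).prod (Measure.pi fun _ => ρ)).real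
      {z : (Fin k → X) × (Fin l → Y) | t ≤ pairMean f z.1 z.2} ≤ exp (-(m * t ^ 2 / (8 * v))) := by
  have : NeZero k := ⟨by rintro rfl; exact (hm.trans_le hk).ne' Nat.cast_zero⟩
  have : NeZero l := ⟨by rintro rfl; exact (hm.trans_le hl).ne' Nat.cast_zero⟩
  -- The Chernoff exponent `-c (1 - c) m t ^ 2 / v` at `s = c m t / v`, with `c = 1 / 6`: the
  -- optimal `c = 1 / 2` would need `t * M ≤ 2 * v`.
  set s : ℝ := m * t / (6 * v)
  have hs0 : 0 ≤ s := by positivity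
  have hsM : |s| * M ≤ m := by
    rw [abs_of_nonneg hs0, div_mul_eq_mul_div, div_le_iff₀ (by positivity), mul_assoc]
    gcongr
  calc ((Measure.pi fun _ => μ).prod (Measure.pi fun _ => ρ)).real
        {z : (Fin k → X) × (Fin l → Y) | t ≤ pairMean f z.1 z.2}
      ≤ exp (-s * t) * mgf (fun z : (Fin k → X) × (Fin l → Y) => pairMean f z.1 z.2)
          ((Measure.pi fun _ => μ).prod (Measure.pi fun _ => ρ)) s :=
        measure_ge_le_exp_mul_mgf t hs0 <|
          integrable_exp_mul_of_forall_abs_le (measurable_pairMean hf)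
            (fun z => abs_pairMean_le hfM _ _) s
    _ ≤ exp (-s * t) * exp (s ^ 2 * v / m) := by
        gcongr
        exact (mgf_pairMean_le hf hfM hf0 hm hk hl hsM).trans (by gcongr)
    _ = exp (-(5 / 36 * (m * t ^ 2 / v))) := by
        rw [← exp_add]
        congr 1
        simp only [s]
        field_simp
        ring
    _ ≤ exp (-(m * t ^ 2 / (8 * v))) := by
        have : 0 ≤ m * t ^ 2 / v := by positivity
        rw [exp_le_exp, mul_comm 8 v, ← div_div]
        linarith

theorem ae_pairMean_eq_zero (hf : f =ᵐ[μ.prod ρ] 0) :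
    ∀ᵐ z : (Fin k → X) × (Fin l → Y) ∂((Measure.pi fun _ => μ).prod (Measure.pi fun _ => ρ)),
      pairMean f z.1 z.2 = 0 := by
  have hpairs : ∀ᵐ z : (Fin k → X) × (Fin l → Y)
      ∂((Measure.pi fun _ => μ).prod (Measure.pi fun _ => ρ)), ∀ i j, f (z.1 i, z.2 j) = 0 :=
    ae_all_iff.2 fun i => ae_all_iff.2 fun j =>
      ((measurePreserving_eval (fun _ => μ) i).prod
        (measurePreserving_eval (fun _ => ρ) j)).quasiMeasurePreserving.ae hf
  filter_upwards [hpairs] with z hz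
  simp [pairMean, hz]

theorem measureReal_lt_pairMean_le (hf : Measurable f) (hfM : ∀ z, |f z| ≤ M)
    (hf0 : ∫ z, f z ∂(μ.prod ρ) = 0) (hfv : ∫ z, f z ^ 2 ∂(μ.prod ρ) ≤ v) (hlam : 0 ≤ lam)
    (hm : (M * lam) ^ 2 / (36 * v) < m) (hk : m ≤ k) (hl : m ≤ l) :
    ((Measure.pi fun _ => μ).prod (Measure.pi fun _ => ρ)).real
      {z : (Fin k → X) × (Fin l → Y) | lam * √(v / m) < pairMean f z.1 z.2}
      ≤ exp (-(lam ^ 2 / 8)) := by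
  have hv0 : 0 ≤ v := (integral_nonneg fun z => sq_nonneg (f z)).trans hfv
  have hm0 : 0 < m := lt_of_le_of_lt (by positivity) hm
  rcases hv0.eq_or_lt with rfl | hv
  · -- Here `hm` only says `0 < m`, since its left-hand side is `0` by division by zero.
    have hf_ae : f =ᵐ[μ.prod ρ] 0 :=
      ae_eq_zero_of_integral_sq_le_zero (memLp_of_bounded (.of_forall fun z => abs_le.1 (hfM z))
        hf.aestronglyMeasurable 2) hfv
    have hnull : ((Measure.pi fun _ => μ).prod (Measure.pi fun _ => ρ))
        {z : (Fin k → X) × (Fin l → Y) | lam * √(0 / m) < pairMean f z.1 z.2} = 0 := by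
      refine measure_eq_zero_iff_ae_notMem.2 ?_
      filter_upwards [ae_pairMean_eq_zero hf_ae] with z hz
      simp [hz]
    rw [measureReal_def, hnull, ENNReal.toReal_zero]
    exact (exp_pos _).le
  · have ht_sq : (lam * √(v / m)) ^ 2 = lam ^ 2 * (v / m) := by
      rw [mul_pow, sq_sqrt (by positivity)]
    have htM : lam * √(v / m) * M ≤ 6 * v := by
      refine le_of_abs_le (abs_le_of_sq_le_sq ?_ (by positivity))
      have hm' : (M * lam) ^ 2 ≤ m * (36 * v) := ((div_lt_iff₀ (by positivity)).1 hm).le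
      calc (lam * √(v / m) * M) ^ 2 = (M * lam) ^ 2 * (v / m) := by rw [mul_pow, ht_sq]; ring
        _ ≤ m * (36 * v) * (v / m) := by gcongr
        _ = (6 * v) ^ 2 := by field_simp; norm_num
    have hexponent : m * (lam * √(v / m)) ^ 2 / (8 * v) = lam ^ 2 / 8 := by
      rw [ht_sq]
      field_simp
    have hsub : {z : (Fin k → X) × (Fin l → Y) | lam * √(v / m) < pairMean f z.1 z.2}
        ⊆ {z | lam * √(v / m) ≤ pairMean f z.1 z.2} :=
      Set.ofPred_subset_ofPred.2 fun _ => le_of_lt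
    rw [← hexponent]
    exact (measureReal_mono hsub).trans
      (measureReal_le_pairMean_le hf hfM hf0 hv hfv hm0 hk hl (by positivity) htM)

theorem measureReal_lt_pairMean_sub_integral_le (hf : Measurable f) (hfM : ∀ z, |f z| ≤ M)
    (hfv : ∫ z, f z ^ 2 ∂(μ.prod ρ) ≤ v) (hlam : 0 ≤ lam) (hm : (M * lam) ^ 2 / (9 * v) < m)
    (hk : m ≤ k) (hl : m ≤ l) :
    ((Measure.pi fun _ => μ).prod (Measure.pi fun _ => ρ)).real
      {z : (Fin k → X) × (Fin l → Y) |
        lam * √(v / m) < pairMean f z.1 z.2 - ∫ w, f w ∂(μ.prod ρ)}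
      ≤ exp (-(lam ^ 2 / 8)) := by
  have hv0 : 0 ≤ v := (integral_nonneg fun z => sq_nonneg (f z)).trans hfv
  have hm0 : 0 < m := lt_of_le_of_lt (by positivity) hm
  have : NeZero k := ⟨by rintro rfl; exact (hm0.trans_le hk).ne' Nat.cast_zero⟩
  have : NeZero l := ⟨by rintro rfl; exact (hm0.trans_le hl).ne' Nat.cast_zero⟩
  set θ : ℝ := ∫ w, f w ∂(μ.prod ρ) with hθ
  have hθM : |θ| ≤ M := by
    simpa using norm_integral_le_of_norm_le_const (μ := μ.prod ρ) (f := f) (.of_forall hfM)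
  have hint : Integrable f (μ.prod ρ) :=
    .of_bound hf.aestronglyMeasurable M (.of_forall hfM)
  have hcentred : ∫ z, (f z - θ) ∂(μ.prod ρ) = 0 := by
    rw [integral_sub hint (integrable_const θ), integral_const, probReal_univ, one_smul, hθ,
      sub_self]
  have hbound : ∀ z, |f z - θ| ≤ 2 * M := fun z =>
    (abs_sub _ _).trans (by linarith [hfM z])
  have hsq : ∫ z, (f z - θ) ^ 2 ∂(μ.prod ρ) ≤ v :=
    (integral_sub_integral_sq_le hf.aestronglyMeasurable).trans hfv
  have hm' : (2 * M * lam) ^ 2 / (36 * v) < m := by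
    convert hm using 1
    ring
  simpa only [pairMean_sub_const] using
    measureReal_lt_pairMean_le (hf.sub_const θ) hbound hcentred hsq hlam hm' hk hl

theorem measureReal_lt_integral_sub_pairMean_le (hf : Measurable f) (hfM : ∀ z, |f z| ≤ M)
    (hfv : ∫ z, f z ^ 2 ∂(μ.prod ρ) ≤ v) (hlam : 0 ≤ lam) (hm : (M * lam) ^ 2 / (9 * v) < m)
    (hk : m ≤ k) (hl : m ≤ l) :
    ((Measure.pi fun _ => μ).prod (Measure.pi fun _ => ρ)).real
      {z : (Fin k → X) × (Fin l → Y) |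
        lam * √(v / m) < ∫ w, f w ∂(μ.prod ρ) - pairMean f z.1 z.2}
      ≤ exp (-(lam ^ 2 / 8)) := by
  have h := measureReal_lt_pairMean_sub_integral_le (f := fun z => -f z) (μ := μ) (ρ := ρ) hf.neg
    (by simpa only [abs_neg] using hfM) (by simpa only [neg_sq] using hfv) hlam hm hk hl
  simpa only [pairMean_neg, integral_neg, neg_sub_neg] using h

end Deviation

section AsymMMD

variable {X : Type*} {n1X n1Y n2X n2Y : ℕ}

/-- The four errors `± (mean - θ)` of the two-sample means of `K` in `asymMMD`, with the signs these
means carry there. -/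
noncomputable def asymMMDError (K : X → X → ℝ) (θ : ℝ)
    (ω : ((Fin n1X → X) × (Fin n1Y → X)) × ((Fin n2X → X) × (Fin n2Y → X))) : Fin 4 → ℝ :=
  ![pairMean (Function.uncurry K) ω.2.1 ω.1.1 - θ, θ - pairMean (Function.uncurry K) ω.2.1 ω.1.2,
    θ - pairMean (Function.uncurry K) ω.2.2 ω.1.1, pairMean (Function.uncurry K) ω.2.2 ω.1.2 - θ]

theorem asymMMD_eq_sum_error (K : X → X → ℝ) (θ : ℝ)
    (ω : ((Fin n1X → X) × (Fin n1Y → X)) × ((Fin n2X → X) × (Fin n2Y → X))) :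
    asymMMD K n1X n1Y n2X n2Y ω.1 ω.2 = ∑ i, asymMMDError K θ ω i := by
  simp only [asymMMD, asymMMDError, pairMean, Function.uncurry_apply_pair, Fin.sum_univ_four,
    Matrix.cons_val]
  ring

variable [MeasurableSpace X] {K : X → X → ℝ} {M m v lam : ℝ}

theorem measureReal_lt_asymMMDError_le (hK : Measurable (Function.uncurry K))
    (hKM : ∀ x y, |K x y| ≤ M) (p : Measure X) [IsProbabilityMeasure p]
    (hKv : ∫ z, Function.uncurry K z ^ 2 ∂(p.prod p) ≤ v) (hlam : 0 ≤ lam)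
    (hm : (M * lam) ^ 2 / (9 * v) < m)
    (h1X : m ≤ n1X) (h1Y : m ≤ n1Y) (h2X : m ≤ n2X) (h2Y : m ≤ n2Y) (i : Fin 4) :
    (((Measure.pi fun _ : Fin n1X => p).prod (Measure.pi fun _ : Fin n1Y => p)).prod
      ((Measure.pi fun _ : Fin n2X => p).prod (Measure.pi fun _ : Fin n2Y => p))).real
      {ω | lam * √(v / m) < asymMMDError K (∫ z, Function.uncurry K z ∂(p.prod p)) ω i}
      ≤ exp (-(lam ^ 2 / 8)) := by
  have hKM' : ∀ z, |Function.uncurry K z| ≤ M := fun z => hKM _ _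
  have hupper {k l : ℕ} (hk : m ≤ k) (hl : m ≤ l) :=
    measureReal_lt_pairMean_sub_integral_le hK hKM' hKv hlam hm hk hl
  have hlower {k l : ℕ} (hk : m ≤ k) (hl : m ≤ l) :=
    measureReal_lt_integral_sub_pairMean_le hK hKM' hKv hlam hm hk hl
  have hswap := Measure.measurePreserving_swap
    (μ := (Measure.pi fun _ : Fin n1X => p).prod (Measure.pi fun _ : Fin n1Y => p))
    (ν := (Measure.pi fun _ : Fin n2X => p).prod (Measure.pi fun _ : Fin n2Y => p))
  fin_cases i
  · exact (measureReal_preimage_le ((measurePreserving_fst.prod measurePreserving_fst).comp hswap)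
      _).trans (hupper h2X h1X)
  · exact (measureReal_preimage_le ((measurePreserving_fst.prod measurePreserving_snd).comp hswap)
      _).trans (hlower h2X h1Y)
  · exact (measureReal_preimage_le ((measurePreserving_snd.prod measurePreserving_fst).comp hswap)
      _).trans (hlower h2Y h1X)
  · exact (measureReal_preimage_le ((measurePreserving_snd.prod measurePreserving_snd).comp hswap)
      _).trans (hupper h2Y h1Y)

theorem measureReal_lt_asymMMD_le (hK : Measurable (Function.uncurry K))
    (hKM : ∀ x y, |K x y| ≤ M) (p : Measure X) [IsProbabilityMeasure p]
    (hKv : ∫ z, Function.uncurry K z ^ 2 ∂(p.prod p) ≤ v) (hlam : 0 ≤ lam)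
    (hm : (M * lam) ^ 2 / (9 * v) < m)
    (h1X : m ≤ n1X) (h1Y : m ≤ n1Y) (h2X : m ≤ n2X) (h2Y : m ≤ n2Y) :
    (((Measure.pi fun _ : Fin n1X => p).prod (Measure.pi fun _ : Fin n1Y => p)).prod
      ((Measure.pi fun _ : Fin n2X => p).prod (Measure.pi fun _ : Fin n2Y => p))).real
      {ω | 4 * (lam * √(v / m)) < asymMMD K n1X n1Y n2X n2Y ω.1 ω.2}
      ≤ 4 * exp (-(lam ^ 2 / 8)) := by
  simp only [asymMMD_eq_sum_error K (∫ z, Function.uncurry K z ∂(p.prod p))]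
  refine (measureReal_card_mul_lt_sum_le Finset.univ (fun i ω => asymMMDError K _ ω i)
    (lam * √(v / m))).trans ?_
  refine (Finset.sum_le_card_nsmul _ _ _ fun i _ =>
    measureReal_lt_asymMMDError_le hK hKM p hKv hlam hm h1X h1Y h2X h2Y i).trans_eq ?_
  simp

end AsymMMD

end

theorem four_mul_exp_neg_sq_sqrt_log {α : ℝ} (hα : 0 < α) (hα4 : α ≤ 4) :
    4 * exp (-(√(8 * log (4 / α)) ^ 2 / 8)) = α := by
  have hlog : 0 ≤ log (4 / α) := log_nonneg ((one_le_div hα).2 hα4)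
  rw [sq_sqrt (by positivity), mul_div_cancel_left₀ _ (by norm_num), exp_neg,
    exp_log (by positivity), inv_div]
  ring

theorem asym_mmd_type_I_error_full_bootstrap_general
    {X : Type*} [MeasurableSpace X] {K : X → X → ℝ} (hKmeas : Measurable (Function.uncurry K))
    (hKbdd : ∀ x y, |K x y| ≤ 1) (p : Measure X) [IsProbabilityMeasure p] {ν : ℝ}
    (hν : ∫ x, ∫ y, (K x y) ^ 2 ∂p ∂p ≤ ν) {n1X n1Y n2X n2Y : ℕ} {m : ℝ}
    (h1X : m ≤ n1X) (h1Y : m ≤ n1Y) (h2X : m ≤ n2X) (h2Y : m ≤ n2Y)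
    {α : ℝ} (hα : 0 < α) (hα1 : α < 1) (hm : √(8 * log (4 / α)) ^ 2 / (9 * ν) < m) :
    (((Measure.pi fun _ : Fin n1X => p).prod (Measure.pi fun _ : Fin n1Y => p)).prod
      ((Measure.pi fun _ : Fin n2X => p).prod (Measure.pi fun _ : Fin n2Y => p)))
      {ω | asymMMD K n1X n1Y n2X n2Y ω.1 ω.2 > 4 * √(8 * log (4 / α)) * √(ν / m)}
      ≤ ENNReal.ofReal α := by
  have hsq_int : Integrable (fun z => Function.uncurry K z ^ 2) (p.prod p) :=
    (memLp_of_bounded (.of_forall fun z : X × X => abs_le.1 (hKbdd z.1 z.2))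
      hKmeas.aestronglyMeasurable 2).integrable_sq
  have hν' : ∫ z, Function.uncurry K z ^ 2 ∂(p.prod p) ≤ ν :=
    (integral_prod _ hsq_int).trans_le hν
  have htail := measureReal_lt_asymMMD_le hKmeas hKbdd p hν' (sqrt_nonneg _)
    (by rwa [one_mul]) h1X h1Y h2X h2Y
  rw [four_mul_exp_neg_sq_sqrt_log hα (by linarith)] at htail
  simp only [gt_iff_lt, mul_assoc]
  exact (ENNReal.le_ofReal_iff_toReal_le (measure_ne_top _ _) hα.le).2 htail

/-- Theorem 3.3, Type-I error part (full bootstrap): under `H₀ : p = q`, with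
`λ₁ = √(8 log(4/α))` and threshold `t_thres = 4λ₁√(ν/(c_a n))`, if `n > λ₁²/(9νc_a)`
then `Pr[T̂_a > t_thres] ≤ α` under the joint product law of the four samples. -/
theorem asym_mmd_type_I_error_full_bootstrap
    {d : ℕ} (𝒳 : Set (EuclideanSpace ℝ (Fin d))) (h𝒳 : MeasurableSet 𝒳)
    (K : 𝒳 → 𝒳 → ℝ)
    (hKmeas : Measurable (Function.uncurry K))
    (hKsym : ∀ x y, K x y = K y x)
    (hKpsd : ∀ (m : ℕ) (z : Fin m → 𝒳) (a : Fin m → ℝ),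
      0 ≤ ∑ i, ∑ j, a i * a j * K (z i) (z j))
    (hKbdd : ∀ x y, |K x y| ≤ 1)
    (p q : Measure 𝒳) [IsProbabilityMeasure p] [IsProbabilityMeasure q]
    (ν : ℝ) (hν1 : ν ≤ 1)
    (hνpp : ∫ x, ∫ y, (K x y)^2 ∂p ∂p ≤ ν)
    (hνpq : ∫ x, ∫ y, (K x y)^2 ∂q ∂p ≤ ν)
    (hνqq : ∫ x, ∫ y, (K x y)^2 ∂q ∂q ≤ ν)
    (n1X n1Y n2X n2Y : ℕ) (ca : ℝ) (hca : 0 < ca) (hca1 : ca < 1)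
    (hbal1 : ca * ((n1X + n1Y + n2X + n2Y : ℕ) : ℝ) ≤ (n1X : ℝ))
    (hbal2 : ca * ((n1X + n1Y + n2X + n2Y : ℕ) : ℝ) ≤ (n1Y : ℝ))
    (hbal3 : ca * ((n1X + n1Y + n2X + n2Y : ℕ) : ℝ) ≤ (n2X : ℝ))
    (hbal4 : ca * ((n1X + n1Y + n2X + n2Y : ℕ) : ℝ) ≤ (n2Y : ℝ))
    (hH0 : p = q)
    (α : ℝ) (hα : 0 < α) (hα1 : α < 1)
    (hn : ((n1X + n1Y + n2X + n2Y : ℕ) : ℝ) >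
      (Real.sqrt (8 * Real.log (4/α)))^2 / (9 * ν * ca)) :
    (((Measure.pi fun _ : Fin n1X => p).prod (Measure.pi fun _ : Fin n1Y => q)).prod
      ((Measure.pi fun _ : Fin n2X => p).prod (Measure.pi fun _ : Fin n2Y => q)))
      {ω : ((Fin n1X → 𝒳) × (Fin n1Y → 𝒳)) × ((Fin n2X → 𝒳) × (Fin n2Y → 𝒳)) |
        asymMMD K n1X n1Y n2X n2Y ω.1 ω.2 >
          4 * Real.sqrt (8 * Real.log (4/α))
            * Real.sqrt (ν/(ca * ((n1X + n1Y + n2X + n2Y : ℕ) : ℝ)))}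
      ≤ ENNReal.ofReal α := by
  subst hH0
  refine asym_mmd_type_I_error_full_bootstrap_general hKmeas hKbdd p hνpp hbal1 hbal2 hbal3 hbal4
    hα hα1 ?_
  rwa [gt_iff_lt, ← div_div, div_lt_iff₀' hca] at hn
end

section
/- (Proposition B.1, part 1: concentration of T̂ under H0.) Assume p = q. Then for any 0 < λ < 3 √(c ν n), with probability at least 1 − 3 e^{−λ²/8} under the product law p^{⊗n_X} ⊗ q^{⊗n_Y}, T̂ ≤ 4/(c n) + 4 λ √(ν/(c n)). -/
open MeasureTheory Real
open scoped BigOperators ENNReal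

/-- The biased empirical squared MMD statistic `T̂` of kernel `K` on samples
`ω = (X, Y)` with `n_X` and `n_Y` points. -/
noncomputable def mmdStat {𝒳 : Type*} (K : 𝒳 → 𝒳 → ℝ) (nX nY : ℕ)
    (ω : (Fin nX → 𝒳) × (Fin nY → 𝒳)) : ℝ :=
  (1/(nX:ℝ)^2) * ∑ i, ∑ j, K (ω.1 i) (ω.1 j)
  + (1/(nY:ℝ)^2) * ∑ i, ∑ j, K (ω.2 i) (ω.2 j)
  - (2/((nX:ℝ)*(nY:ℝ))) * ∑ i, ∑ j, K (ω.1 i) (ω.2 j)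

/-!
Under `p = q` all three double sums estimate the same mean `θ = E K(x, y)`, so after cancellation
only their fluctuations and the diagonal terms remain. The latter, with the change of normalisation
from `n ^ 2` to `n (n - 1)`, cost at most `2 / n_X + 2 / n_Y`.

The off-diagonal sums are U-statistics, hence not sums of independent terms. Hoeffding's averaging
trick repairs this: the permutations of the sample act transitively on the pairs being averaged, so
a U-statistic is the average, over the group, of averages over disjoint pairs, and the latter are
averages of independent variables. By Jensen's inequality the moment generating function of the
U-statistic is at most that of a single such average. Since `exp u ≤ 1 + u + u ^ 2` for `u ≤ 3 / 2`,
only the second moment `ν` of the kernel enters, and Chernoff's bound gives the tail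
`exp (-m t² / (4 ν))` for `t ≤ 3 ν`, where `m` is the number of disjoint pairs.
-/

open ProbabilityTheory Finset

section MomentGeneratingFunction

variable {Ω : Type*} {mΩ : MeasurableSpace Ω} {μ : Measure Ω}

lemma exp_le_one_add_add_sq {u : ℝ} (hu : u ≤ 3 / 2) : exp u ≤ 1 + u + u ^ 2 := by
  rcases le_total u (-1) with h_neg | h_neg
  · have h_exp : exp u ≤ 1 := exp_le_one_iff.2 (by linarith)
    nlinarith
  rcases le_total u 1 with h_one | h_one
  · have h_abs := (abs_le.1 (abs_exp_sub_one_sub_id_le (abs_le.2 ⟨h_neg, h_one⟩))).2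
    linarith
  · obtain ⟨v, rfl⟩ : ∃ v, u = 1 + v := ⟨u - 1, by ring⟩
    have hv0 : 0 ≤ v := by linarith
    have hv1 : v ≤ 1 / 2 := by linarith
    have h_cubic : exp v ≤ 1 + v + v ^ 2 / 2 + 2 / 9 * v ^ 3 := by
      have h_taylor := exp_bound' hv0 (by linarith) (n := 3) (by norm_num)
      norm_num [sum_range_succ, Nat.factorial] at h_taylor
      linarith
    calc exp (1 + v) = exp 1 * exp v := exp_add 1 v
      _ ≤ 2.72 * (1 + v + v ^ 2 / 2 + 2 / 9 * v ^ 3) := by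
        gcongr
        linarith [exp_one_lt_d9]
      _ ≤ 1 + (1 + v) + (1 + v) ^ 2 := by nlinarith [mul_nonneg hv0 (sub_nonneg.2 hv1)]

lemma mgf_le_exp_of_le_one [IsProbabilityMeasure μ] {X : Ω → ℝ} (hX : MemLp X 2 μ)
    (hX_le : ∀ᵐ ω ∂μ, X ω ≤ 1) {s : ℝ} (hs0 : 0 ≤ s) (hs : s ≤ 3 / 2) :
    mgf X μ s ≤ exp (s * ∫ ω, X ω ∂μ + s ^ 2 * ∫ ω, X ω ^ 2 ∂μ) := by
  have h_lin : Integrable (fun ω ↦ 1 + s * X ω) μ :=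
    (integrable_const 1).add ((hX.integrable one_le_two).const_mul s)
  have h_sq : Integrable (fun ω ↦ s ^ 2 * X ω ^ 2) μ := hX.integrable_sq.const_mul _
  have h_pointwise : ∀ᵐ ω ∂μ, exp (s * X ω) ≤ 1 + s * X ω + s ^ 2 * X ω ^ 2 := by
    filter_upwards [hX_le] with ω hω
    rw [← mul_pow]
    exact exp_le_one_add_add_sq (by nlinarith)
  calc mgf X μ s
      ≤ ∫ ω, 1 + s * X ω + s ^ 2 * X ω ^ 2 ∂μ :=
        integral_mono_of_nonneg (ae_of_all _ fun _ ↦ (exp_pos _).le) (h_lin.add h_sq) h_pointwise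
    _ = s * ∫ ω, X ω ∂μ + s ^ 2 * ∫ ω, X ω ^ 2 ∂μ + 1 := by
        rw [integral_add h_lin h_sq, integral_add (integrable_const 1)
          ((hX.integrable one_le_two).const_mul s), integral_const_mul, integral_const_mul,
          integral_const, probReal_univ, one_smul]
        ring
    _ ≤ exp (s * ∫ ω, X ω ∂μ + s ^ 2 * ∫ ω, X ω ^ 2 ∂μ) := add_one_le_exp _

lemma exp_expect_le {R : Type*} {s : Finset R} (hs : s.Nonempty) (y : R → ℝ) :
    exp (𝔼 r ∈ s, y r) ≤ 𝔼 r ∈ s, exp (y r) := by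
  have h_jensen := convexOn_exp.map_sum_le (t := s) (w := fun _ ↦ (#s : ℝ)⁻¹) (p := y)
    (fun _ _ ↦ by positivity) (by simp [hs.card_ne_zero]) (fun _ _ ↦ Set.mem_univ _)
  rw [expect_eq_sum_div_card, expect_eq_sum_div_card, sum_div, sum_div]
  simpa only [smul_eq_mul, inv_mul_eq_div] using h_jensen

lemma integrable_exp_mul_expect [IsFiniteMeasure μ] {R : Type*} {s : Finset R} (hs : s.Nonempty)
    {Y : R → Ω → ℝ} {b t : ℝ} (hY : ∀ r, AEMeasurable (Y r) μ) (hb : ∀ r ω, Y r ω ≤ b)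
    (ht : 0 ≤ t) : Integrable (fun ω ↦ exp (t * 𝔼 r ∈ s, Y r ω)) μ := by
  refine integrable_exp_mul_of_le t b ht ?_ (ae_of_all _ fun ω ↦ expect_le hs fun r _ ↦ hb r ω)
  simp_rw [expect_eq_sum_div_card]
  fun_prop

lemma mgf_expect_le {R : Type*} {s : Finset R} (hs : s.Nonempty) {Y : R → Ω → ℝ} {t : ℝ}
    (hY : ∀ r ∈ s, Integrable (fun ω ↦ exp (t * Y r ω)) μ) :
    mgf (fun ω ↦ 𝔼 r ∈ s, Y r ω) μ t ≤ 𝔼 r ∈ s, mgf (Y r) μ t := by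
  have h_int : Integrable (fun ω ↦ 𝔼 r ∈ s, exp (t * Y r ω)) μ := by
    simp_rw [expect_eq_sum_div_card]
    exact (integrable_finsetSum s hY).div_const _
  calc mgf (fun ω ↦ 𝔼 r ∈ s, Y r ω) μ t
      ≤ ∫ ω, 𝔼 r ∈ s, exp (t * Y r ω) ∂μ := by
        refine integral_mono_of_nonneg (ae_of_all _ fun _ ↦ (exp_pos _).le) h_int
          (ae_of_all _ fun ω ↦ ?_)
        simpa only [mul_expect] using exp_expect_le hs fun r ↦ t * Y r ω
    _ = 𝔼 r ∈ s, mgf (Y r) μ t := by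
        simp_rw [expect_eq_sum_div_card]
        rw [integral_div, integral_finsetSum s hY]
        rfl

lemma measureReal_ge_le_exp_of_mgf_le [IsFiniteMeasure μ] {W : Ω → ℝ} {m : ℕ} {θ ν t : ℝ}
    (hν : 0 < ν) (ht0 : 0 ≤ t) (ht : t ≤ 3 * ν)
    (hW : ∀ s, 0 ≤ s → Integrable (fun ω ↦ exp (s * W ω)) μ)
    (h_mgf : ∀ s, 0 ≤ s → s ≤ 3 / 2 → mgf W μ (m * s) ≤ exp (s * θ + s ^ 2 * ν) ^ m) :
    μ.real {ω | θ + t ≤ W ω} ≤ exp (-(m * t ^ 2 / (4 * ν))) := by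
  -- The exponent `m (s ^ 2 ν - s t)` is minimal at `s = t / (2 ν)`.
  set s := t / (2 * ν) with hs
  have hs0 : 0 ≤ s := by positivity
  have hs1 : s ≤ 3 / 2 := by rw [hs, div_le_iff₀ (by positivity)]; linarith
  calc μ.real {ω | θ + t ≤ W ω}
      ≤ exp (-(m * s) * (θ + t)) * mgf W μ (m * s) :=
        measure_ge_le_exp_mul_mgf _ (by positivity) (hW _ (by positivity))
    _ ≤ exp (-(m * s) * (θ + t)) * exp (s * θ + s ^ 2 * ν) ^ m := by
        gcongr
        exact h_mgf s hs0 hs1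
    _ = exp (-(m * t ^ 2 / (4 * ν))) := by
        rw [← exp_nat_mul, ← exp_add, hs]
        congr 1
        field_simp
        ring

end MomentGeneratingFunction

lemma expect_smul_eq_expect_orbit {G α M : Type*} [Group G] [Fintype G] [MulAction G α]
    [AddCommMonoid M] [Module ℚ≥0 M] {s : Finset α} {x : α}
    (hs : (s : Set α) = MulAction.orbit G x) (f : α → M) :
    𝔼 g : G, f (g • x) = 𝔼 y ∈ s, f y := by
  have mem_iff (y : α) : y ∈ s ↔ y ∈ MulAction.orbit G x := by rw [← hs, mem_coe]
  calc 𝔼 g : G, f (g • x)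
      = 𝔼 _y ∈ s, 𝔼 g : G, f (g • x) :=
        (expect_const ⟨x, (mem_iff x).2 (MulAction.mem_orbit_self x)⟩ _).symm
    _ = 𝔼 y ∈ s, 𝔼 g : G, f (g • y) := by
        refine expect_congr rfl fun y hy ↦ ?_
        obtain ⟨k, rfl⟩ := (mem_iff y).1 hy
        exact (Fintype.expect_equiv (Equiv.mulRight k) _ _ fun g ↦ by simp [mul_smul]).symm
    _ = 𝔼 g : G, 𝔼 y ∈ s, f (g • y) := expect_comm _ _ _
    _ = 𝔼 _g : G, 𝔼 y ∈ s, f y := by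
        refine expect_congr rfl fun g _ ↦
          expect_equiv (MulAction.toPerm g) (fun y ↦ ?_) fun _ _ ↦ rfl
        rw [MulAction.toPerm_apply, mem_iff, mem_iff, ← MulAction.orbit_eq_iff,
          ← MulAction.orbit_eq_iff, MulAction.orbit_smul]
    _ = 𝔼 y ∈ s, f y := Fintype.expect_const _

section DisjointPairs

-- Injectivity of `Sum.elim a b` says that the pairs `{a k, b k}` are genuine and pairwise disjoint.
variable {Ω 𝒳 ι κ : Type*} {mΩ : MeasurableSpace Ω} {m𝒳 : MeasurableSpace 𝒳} [Fintype κ]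
  {P : Measure Ω} {p : Measure 𝒳} [IsProbabilityMeasure p] {X : ι → Ω → 𝒳} {a b : κ → ι}

lemma hasLaw_pi_prodMk (hX : ∀ i, HasLaw (X i) p P) (hind : iIndepFun X P)
    (hab : Function.Injective (Sum.elim a b)) :
    HasLaw (fun ω k ↦ (X (a k) ω, X (b k) ω)) (Measure.pi fun _ : κ ↦ p.prod p) P := by
  have h_sum : HasLaw (fun ω k ↦ X (Sum.elim a b k) ω) (Measure.pi fun _ : κ ⊕ κ ↦ p) P :=
    (hind.precomp hab).hasLaw_pi fun _ ↦ hX _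
  have h_split := (measurePreserving_arrowProdEquivProdArrow 𝒳 𝒳 κ (fun _ ↦ p) fun _ ↦ p).symm.comp
    (measurePreserving_sumPiEquivProdPi fun _ : κ ⊕ κ ↦ p)
  exact h_split.hasLaw.comp h_sum

lemma mgf_expect_prodMk (hX : ∀ i, HasLaw (X i) p P) (hind : iIndepFun X P)
    (hab : Function.Injective (Sum.elim a b)) {f : 𝒳 × 𝒳 → ℝ}
    (hf : Measurable f) (s : ℝ) :
    mgf (fun ω ↦ 𝔼 k, f (X (a k) ω, X (b k) ω)) P (Fintype.card κ * s) =
      mgf f (p.prod p) s ^ Fintype.card κ := by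
  have := hind.isProbabilityMeasure
  have h_pair (k : κ) : HasLaw (fun ω ↦ (X (a k) ω, X (b k) ω)) (p.prod p) P :=
    (measurePreserving_eval (fun _ : κ ↦ p.prod p) k).hasLaw.comp (hasLaw_pi_prodMk hX hind hab)
  have h_indep : iIndepFun (fun k ω ↦ f (X (a k) ω, X (b k) ω)) P :=
    ((iIndepFun_iff_hasLaw_pi_pi h_pair).2 (hasLaw_pi_prodMk hX hind hab)).comp (fun _ ↦ f)
      fun _ ↦ hf
  have h_meas (k : κ) : AEMeasurable (fun ω ↦ f (X (a k) ω, X (b k) ω)) P :=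
    hf.comp_aemeasurable (h_pair k).aemeasurable
  have h_mgf (k : κ) : mgf (fun ω ↦ f (X (a k) ω, X (b k) ω)) P s = mgf f (p.prod p) s := by
    rw [← (h_pair k).map_eq, mgf_map (h_pair k).aemeasurable (by fun_prop)]
    rfl
  calc mgf (fun ω ↦ 𝔼 k, f (X (a k) ω, X (b k) ω)) P (Fintype.card κ * s)
      = mgf (∑ k, fun ω ↦ f (X (a k) ω, X (b k) ω)) P s := by
        simp only [mgf, mul_right_comm _ s, Fintype.card_mul_expect, Finset.sum_apply, mul_comm s]
    _ = mgf f (p.prod p) s ^ Fintype.card κ := by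
        rw [h_indep.mgf_sum₀ h_meas, prod_congr rfl fun k _ ↦ h_mgf k, prod_const, card_univ]

end DisjointPairs

section OrbitAverage

variable {Ω 𝒳 ι κ G : Type*} {mΩ : MeasurableSpace Ω} {m𝒳 : MeasurableSpace 𝒳} [Fintype κ]
  [Group G] [MulAction G ι] {P : Measure Ω} {p : Measure 𝒳} [IsProbabilityMeasure p]
  {X : ι → Ω → 𝒳} {a b : κ → ι} {E : Finset (ι × ι)}

lemma expect_orbit_eq_expect_expect [Fintype G] {M : Type*} [AddCommMonoid M] [Module ℚ≥0 M]
    [Nonempty κ] (hE : ∀ k, (E : Set (ι × ι)) = MulAction.orbit G (a k, b k)) (F : ι × ι → M) :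
    𝔼 e ∈ E, F e = 𝔼 g : G, 𝔼 k, F (g • a k, g • b k) := by
  calc 𝔼 e ∈ E, F e = 𝔼 k, 𝔼 g : G, F (g • (a k, b k)) := by
        simp only [fun k ↦ expect_smul_eq_expect_orbit (hE k) F, Fintype.expect_const]
    _ = 𝔼 g : G, 𝔼 k, F (g • a k, g • b k) := expect_comm _ _ _

lemma mgf_expect_orbit_le [Finite G] [Nonempty κ] (hX : ∀ i, HasLaw (X i) p P)
    (hind : iIndepFun X P) (hab : Function.Injective (Sum.elim a b))
    (hE : ∀ k, (E : Set (ι × ι)) = MulAction.orbit G (a k, b k)) {f : 𝒳 × 𝒳 → ℝ}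
    (hf : Measurable f) (hf_le : ∀ z, f z ≤ 1) {s : ℝ} (hs : 0 ≤ s) :
    mgf (fun ω ↦ 𝔼 e ∈ E, f (X e.1 ω, X e.2 ω)) P (Fintype.card κ * s) ≤
      mgf f (p.prod p) s ^ Fintype.card κ := by
  have := hind.isProbabilityMeasure
  cases nonempty_fintype G
  have h_smul (g : G) : Function.Injective (Sum.elim (fun k ↦ g • a k) fun k ↦ g • b k) := by
    rw [← Function.comp_def, ← Function.comp_def, ← Sum.comp_elim]
    exact (MulAction.injective g).comp hab
  have hX_meas (i : ι) : AEMeasurable (X i) P := (hX i).aemeasurable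
  simp_rw [expect_orbit_eq_expect_expect hE fun e ↦ f (X e.1 _, X e.2 _)]
  calc mgf (fun ω ↦ 𝔼 g : G, 𝔼 k, f (X (g • a k) ω, X (g • b k) ω)) P (Fintype.card κ * s)
      ≤ 𝔼 g : G, mgf (fun ω ↦ 𝔼 k, f (X (g • a k) ω, X (g • b k) ω)) P (Fintype.card κ * s) :=
        mgf_expect_le univ_nonempty fun g _ ↦ integrable_exp_mul_expect univ_nonempty
          (fun k ↦ by fun_prop) (fun k ω ↦ hf_le _) (by positivity)
    _ = mgf f (p.prod p) s ^ Fintype.card κ := by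
        simp only [fun g ↦ mgf_expect_prodMk hX hind (h_smul g) hf s, Fintype.expect_const]

lemma measureReal_ge_expect_orbit_le [Finite G] (hX : ∀ i, HasLaw (X i) p P)
    (hind : iIndepFun X P) (hab : Function.Injective (Sum.elim a b))
    (hE : ∀ k, (E : Set (ι × ι)) = MulAction.orbit G (a k, b k)) {f : 𝒳 × 𝒳 → ℝ}
    (hf : Measurable f) (hf_le : ∀ z, f z ≤ 1) (hf_sq : MemLp f 2 (p.prod p)) {ν t : ℝ}
    (hν : 0 < ν) (hfν : ∫ z, f z ^ 2 ∂p.prod p ≤ ν) (ht0 : 0 ≤ t) (ht : t ≤ 3 * ν) :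
    P.real {ω | ∫ z, f z ∂p.prod p + t ≤ 𝔼 e ∈ E, f (X e.1 ω, X e.2 ω)} ≤
      exp (-(Fintype.card κ * t ^ 2 / (4 * ν))) := by
  have := hind.isProbabilityMeasure
  rcases isEmpty_or_nonempty κ with hκ | ⟨⟨k⟩⟩
  · simp
  have : Nonempty κ := ⟨k⟩
  have hE_nonempty : E.Nonempty := by
    rw [← coe_nonempty, hE k]
    exact MulAction.nonempty_orbit _
  refine measureReal_ge_le_exp_of_mgf_le hν ht0 ht (fun s hs ↦ ?_) fun s hs0 hs ↦ ?_
  · have hX_meas (i : ι) : AEMeasurable (X i) P := (hX i).aemeasurable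
    exact integrable_exp_mul_expect hE_nonempty (fun e ↦ by fun_prop) (fun e ω ↦ hf_le _) hs
  · calc mgf (fun ω ↦ 𝔼 e ∈ E, f (X e.1 ω, X e.2 ω)) P (Fintype.card κ * s)
        ≤ mgf f (p.prod p) s ^ Fintype.card κ := mgf_expect_orbit_le hX hind hab hE hf hf_le hs0
      _ ≤ exp (s * ∫ z, f z ∂p.prod p + s ^ 2 * ∫ z, f z ^ 2 ∂p.prod p) ^ Fintype.card κ := by
          gcongr
          · exact mgf_nonneg
          · exact mgf_le_exp_of_le_one hf_sq (ae_of_all _ hf_le) hs0 hs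
      _ ≤ exp (s * ∫ z, f z ∂p.prod p + s ^ 2 * ν) ^ Fintype.card κ := by gcongr

end OrbitAverage

section UStatistics

variable {𝒳 : Type*}

/-- The U-statistic of order two with kernel `h` on the sample `z`: the average of `h` over ordered
pairs of distinct sample points. -/
noncomputable def uStatistic (h : 𝒳 → 𝒳 → ℝ) {n : ℕ} (z : Fin n → 𝒳) : ℝ :=
  𝔼 e ∈ univ.offDiag, h (z e.1) (z e.2)

/-- The two-sample U-statistic of degree `(1, 1)` with kernel `h` on the samples `x` and `y`. -/
noncomputable def twoSampleUStatistic (h : 𝒳 → 𝒳 → ℝ) {m n : ℕ} (x : Fin m → 𝒳) (y : Fin n → 𝒳) :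
    ℝ :=
  𝔼 i, 𝔼 j, h (x i) (y j)

lemma orbit_perm_mk_eq_offDiag {α : Type*} {i j : α} (hij : i ≠ j) :
    MulAction.orbit (Equiv.Perm α) (i, j) = Set.univ.offDiag := by
  ext ⟨k, l⟩
  simp only [MulAction.mem_orbit_iff, Prod.smul_mk, Prod.mk.injEq, Set.mem_offDiag, Set.mem_univ,
    true_and]
  refine ⟨?_, MulAction.is_two_pretransitive_iff.1
    (Equiv.Perm.isMultiplyPretransitive α 2) hij⟩
  rintro ⟨g, rfl, rfl⟩
  exact (MulAction.injective g).ne hij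

lemma orbit_perm_prod_perm_mk_eq_range {α β : Type*} (i : α) (j : β) :
    letI := MulAction.compHom (α ⊕ β) (Equiv.Perm.sumCongrHom α β)
    MulAction.orbit (Equiv.Perm α × Equiv.Perm β) ((.inl i, .inr j) : (α ⊕ β) × (α ⊕ β)) =
      Set.range (Prod.map Sum.inl Sum.inr) := by
  let := MulAction.compHom (α ⊕ β) (Equiv.Perm.sumCongrHom α β)
  classical
  ext e
  simp only [MulAction.mem_orbit_iff, Set.mem_range]
  constructor
  · rintro ⟨g, rfl⟩
    exact ⟨(g.1 i, g.2 j), rfl⟩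
  · rintro ⟨⟨k, l⟩, rfl⟩
    refine ⟨(Equiv.swap i k, Equiv.swap j l), ?_⟩
    simp [MulAction.compHom_smul_def]

variable {Ω : Type*} {mΩ : MeasurableSpace Ω} {m𝒳 : MeasurableSpace 𝒳} {P : Measure Ω}
  {p : Measure 𝒳} [IsProbabilityMeasure p] {h : 𝒳 → 𝒳 → ℝ} {ν t : ℝ}

lemma measureReal_ge_uStatistic_le {n : ℕ} {X : Fin n → Ω → 𝒳} (hX : ∀ i, HasLaw (X i) p P)
    (hind : iIndepFun X P) (hh : Measurable (Function.uncurry h)) (hh_le : ∀ x y, h x y ≤ 1)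
    (hh_sq : MemLp (Function.uncurry h) 2 (p.prod p)) (hν : 0 < ν)
    (hhν : ∫ z, h z.1 z.2 ^ 2 ∂p.prod p ≤ ν) (ht0 : 0 ≤ t) (ht : t ≤ 3 * ν) :
    P.real {ω | ∫ z, h z.1 z.2 ∂p.prod p + t ≤ uStatistic h fun i ↦ X i ω} ≤
      exp (-((n / 2 : ℕ) * t ^ 2 / (4 * ν))) := by
  let a (k : Fin (n / 2)) : Fin n := ⟨2 * k, by lia⟩
  let b (k : Fin (n / 2)) : Fin n := ⟨2 * k + 1, by lia⟩
  have hab : Function.Injective (Sum.elim a b) := by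
    rintro (k | k) (l | l) <;> simp [a, b, Fin.ext_iff] <;> lia
  exact Fintype.card_fin (n / 2) ▸ measureReal_ge_expect_orbit_le (E := univ.offDiag)
    hX hind hab (fun k ↦ by
      rw [orbit_perm_mk_eq_offDiag (by simp [a, b]), coe_offDiag, coe_univ])
    hh (fun z ↦ hh_le z.1 z.2) hh_sq hν hhν ht0 ht

lemma measureReal_ge_twoSampleUStatistic_le {m n : ℕ} {X : Fin m ⊕ Fin n → Ω → 𝒳}
    (hX : ∀ i, HasLaw (X i) p P) (hind : iIndepFun X P) (hh : Measurable (Function.uncurry h))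
    (hh_le : ∀ x y, h x y ≤ 1) (hh_sq : MemLp (Function.uncurry h) 2 (p.prod p)) (hν : 0 < ν)
    (hhν : ∫ z, h z.1 z.2 ^ 2 ∂p.prod p ≤ ν) (ht0 : 0 ≤ t) (ht : t ≤ 3 * ν) :
    P.real {ω | ∫ z, h z.1 z.2 ∂p.prod p + t ≤
        twoSampleUStatistic h (fun i ↦ X (.inl i) ω) fun j ↦ X (.inr j) ω} ≤
      exp (-((min m n : ℕ) * t ^ 2 / (4 * ν))) := by
  let := MulAction.compHom (Fin m ⊕ Fin n) (Equiv.Perm.sumCongrHom (Fin m) (Fin n))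
  let a (k : Fin (min m n)) : Fin m ⊕ Fin n := .inl (k.castLE (min_le_left m n))
  let b (k : Fin (min m n)) : Fin m ⊕ Fin n := .inr (k.castLE (min_le_right m n))
  have hab : Function.Injective (Sum.elim a b) := by
    rintro (k | k) (l | l) <;> simp [a, b]
  have h_tail := measureReal_ge_expect_orbit_le (E := univ.image (Prod.map Sum.inl Sum.inr))
    hX hind hab (fun k ↦ by
      rw [orbit_perm_prod_perm_mk_eq_range, coe_image, coe_univ, Set.image_univ])
    hh (fun z ↦ hh_le z.1 z.2) hh_sq hν hhν ht0 ht
  simp only [Fintype.card_fin, ← univ_product_univ, expect_product,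
    expect_image (Sum.inl_injective.prodMap Sum.inr_injective).injOn] at h_tail
  exact h_tail

end UStatistics

section SampleBounds

variable {𝒳 : Type*}

lemma sum_sum_eq_mul_uStatistic_add_sum {n : ℕ} (h : 𝒳 → 𝒳 → ℝ) (z : Fin n → 𝒳) :
    ∑ i, ∑ j, h (z i) (z j) = ((n : ℝ) ^ 2 - n) * uStatistic h z + ∑ i, h (z i) (z i) := by
  have h_card : (#(univ : Finset (Fin n)).offDiag : ℝ) = (n : ℝ) ^ 2 - n := by
    rw [offDiag_card, card_fin, Nat.cast_sub (Nat.le_mul_self n), Nat.cast_mul, sq]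
  rw [uStatistic, ← h_card, card_mul_expect, add_comm,
    ← sum_diag univ fun e : Fin n × Fin n ↦ h (z e.1) (z e.2),
    ← sum_union (disjoint_diag_offDiag _), diag_union_offDiag, sum_product]

lemma one_div_sq_mul_sum_sum_le {n : ℕ} (hn : 0 < n) {h : 𝒳 → 𝒳 → ℝ} (hh : ∀ x, h x x ≤ 1)
    {z : Fin n → 𝒳} {u : ℝ} (hu : -1 ≤ u) (hz : uStatistic h z ≤ u) :
    1 / (n : ℝ) ^ 2 * ∑ i, ∑ j, h (z i) (z j) ≤ u + 2 / n := by
  have hn1 : (1 : ℝ) ≤ n := by exact_mod_cast hn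
  have h_diag : ∑ i, h (z i) (z i) ≤ n := by
    simpa using sum_le_sum fun i (_ : i ∈ univ) ↦ hh (z i)
  calc 1 / (n : ℝ) ^ 2 * ∑ i, ∑ j, h (z i) (z j)
      ≤ 1 / (n : ℝ) ^ 2 * (((n : ℝ) ^ 2 - n) * u + n) := by
        rw [sum_sum_eq_mul_uStatistic_add_sum]
        gcongr
        nlinarith
    _ = u + (1 - u) / n := by
        field_simp
        ring
    _ ≤ u + 2 / n := by
        gcongr
        linarith

lemma mmdStat_le {K : 𝒳 → 𝒳 → ℝ} {θ t : ℝ} {nX nY : ℕ} (hnX : 0 < nX) (hnY : 0 < nY)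
    (hK : ∀ x, K x x ≤ 1) (hθ : -1 ≤ θ) (ht : 0 ≤ t) {x : Fin nX → 𝒳} {y : Fin nY → 𝒳}
    (hx : uStatistic K x ≤ θ + t) (hy : uStatistic K y ≤ θ + t)
    (hxy : θ - t ≤ twoSampleUStatistic K x y) :
    mmdStat K nX nY (x, y) ≤ 2 / nX + 2 / nY + 4 * t := by
  have h_cross : 2 / ((nX : ℝ) * nY) * ∑ i, ∑ j, K (x i) (y j) =
      2 * twoSampleUStatistic K x y := by
    simp only [twoSampleUStatistic, Fintype.expect_eq_sum_div_card, Fintype.card_fin, ← sum_div]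
    ring
  have hX := one_div_sq_mul_sum_sum_le hnX hK (by linarith) hx
  have hY := one_div_sq_mul_sum_sum_le hnY hK (by linarith) hy
  rw [mmdStat, h_cross]
  linarith

end SampleBounds

section Concentration

variable {Ω 𝒳 : Type*} {mΩ : MeasurableSpace Ω} {m𝒳 : MeasurableSpace 𝒳}

lemma measureReal_mmdStat_gt_le {P : Measure Ω} {p : Measure 𝒳} [IsProbabilityMeasure p]
    {K : 𝒳 → 𝒳 → ℝ} {ν t : ℝ} {nX nY : ℕ} (hnX : 0 < nX) (hnY : 0 < nY)
    {X : Fin nX ⊕ Fin nY → Ω → 𝒳} (hX : ∀ i, HasLaw (X i) p P) (hind : iIndepFun X P)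
    (hK : Measurable (Function.uncurry K)) (hK_abs : ∀ x y, |K x y| ≤ 1) (hν : 0 < ν)
    (hKν : ∫ z, K z.1 z.2 ^ 2 ∂p.prod p ≤ ν) (ht0 : 0 ≤ t) (ht : t ≤ 3 * ν) :
    P.real {ω | 2 / nX + 2 / nY + 4 * t <
        mmdStat K nX nY (fun i ↦ X (.inl i) ω, fun j ↦ X (.inr j) ω)} ≤
      exp (-((nX / 2 : ℕ) * t ^ 2 / (4 * ν))) + exp (-((nY / 2 : ℕ) * t ^ 2 / (4 * ν))) +
        exp (-((min nX nY : ℕ) * t ^ 2 / (4 * ν))) := by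
  have := hind.isProbabilityMeasure
  have hK_le (x y : 𝒳) : K x y ≤ 1 := (abs_le.1 (hK_abs x y)).2
  have hK_neg_le (x y : 𝒳) : -K x y ≤ 1 := by linarith [(abs_le.1 (hK_abs x y)).1]
  have hK_memLp : MemLp (Function.uncurry K) 2 (p.prod p) :=
    .of_bound hK.aestronglyMeasurable 1 (ae_of_all _ fun z ↦ hK_abs z.1 z.2)
  set θ := ∫ z, K z.1 z.2 ∂p.prod p with hθ
  have hθ_ge : -1 ≤ θ := by
    have h_norm : ‖θ‖ ≤ 1 := by
      simpa using norm_integral_le_of_norm_le_const (μ := p.prod p) (f := fun z ↦ K z.1 z.2)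
        (ae_of_all _ fun z ↦ hK_abs z.1 z.2)
    exact (abs_le.1 h_norm).1
  have h_tail_X := measureReal_ge_uStatistic_le (fun i ↦ hX (.inl i))
    (hind.precomp Sum.inl_injective) hK hK_le hK_memLp hν hKν ht0 ht
  have h_tail_Y := measureReal_ge_uStatistic_le (fun j ↦ hX (.inr j))
    (hind.precomp Sum.inr_injective) hK hK_le hK_memLp hν hKν ht0 ht
  have h_tail_XY := measureReal_ge_twoSampleUStatistic_le hX hind (h := fun x y ↦ -K x y)
    hK.neg hK_neg_le hK_memLp.neg hν (by simpa only [neg_sq] using hKν) ht0 ht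
  rw [integral_neg, ← hθ] at h_tail_XY
  simp only [twoSampleUStatistic, expect_neg_distrib] at h_tail_XY
  refine (measureReal_mono fun ω hω ↦ ?_).trans <| (measureReal_union_le _ _).trans <|
    add_le_add ((measureReal_union_le _ _).trans <| add_le_add h_tail_X h_tail_Y) h_tail_XY
  by_contra! h_notMem
  simp only [Set.mem_union, Set.mem_ofPred_eq, not_or, not_le] at h_notMem hω
  obtain ⟨⟨h_X, h_Y⟩, h_XY⟩ := h_notMem
  exact hω.not_ge <| mmdStat_le hnX hnY (fun x ↦ hK_le x x) hθ_ge ht0 h_X.le h_Y.le <| by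
    rw [twoSampleUStatistic]
    linarith

lemma hasLaw_sumElim_pi {α β : Type*} [Fintype α] [Fintype β] (μ : α ⊕ β → Measure 𝒳)
    [∀ i, SigmaFinite (μ i)] :
    HasLaw (fun (ω : (α → 𝒳) × (β → 𝒳)) i ↦ Sum.elim ω.1 ω.2 i) (Measure.pi μ)
      ((Measure.pi fun i ↦ μ (.inl i)).prod (Measure.pi fun j ↦ μ (.inr j))) := by
  convert (measurePreserving_sumPiEquivProdPi_symm μ).hasLaw using 1
  ext ω (i | j) <;> rfl

lemma one_sub_ofReal_le_measure {μ : Measure Ω} [IsProbabilityMeasure μ] {s : Set Ω} {δ : ℝ}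
    (hs : μ.real sᶜ ≤ δ) : 1 - ENNReal.ofReal δ ≤ μ s := by
  rw [tsub_le_iff_right]
  calc 1 = μ (s ∪ sᶜ) := by rw [Set.union_compl_self, measure_univ]
    _ ≤ μ s + μ sᶜ := measure_union_le _ _
    _ ≤ μ s + ENNReal.ofReal δ := by
        gcongr
        exact (ENNReal.le_ofReal_iff_toReal_le (measure_ne_top μ _)
          (measureReal_nonneg.trans hs)).2 hs

lemma exp_neg_mul_sq_div_le {a m lam ν t : ℝ} (hν : 0 < ν) (ham : a / 2 ≤ m)
    (ht : a * t ^ 2 = lam ^ 2 * ν) : exp (-(m * t ^ 2 / (4 * ν))) ≤ exp (-lam ^ 2 / 8) := by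
  rw [exp_le_exp, neg_div, neg_le_neg_iff, div_le_div_iff₀ (by norm_num) (by positivity)]
  nlinarith [mul_le_mul_of_nonneg_right ham (sq_nonneg t)]

lemma mul_sqrt_div_le {a b lam ν : ℝ} (ha : 0 < a) (hν : 0 ≤ ν) (h : lam ≤ b * √(a * ν)) :
    lam * √(ν / a) ≤ b * ν := by
  calc lam * √(ν / a) ≤ b * √(a * ν) * √(ν / a) := by gcongr
    _ = b * ν := by
      rw [mul_assoc, ← sqrt_mul (by positivity), show a * ν * (ν / a) = ν ^ 2 by field_simp,
        sqrt_sq hν]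

lemma half_le_natCast_half {a : ℝ} {n : ℕ} (hn : a + 1 ≤ n) : a / 2 ≤ (n / 2 : ℕ) := by
  have h_div : (n : ℝ) ≤ 2 * (n / 2 : ℕ) + 1 := by exact_mod_cast (by lia : n ≤ 2 * (n / 2) + 1)
  linarith

theorem mmd_concentration_H0_general {K : 𝒳 → 𝒳 → ℝ} (hK : Measurable (Function.uncurry K))
    (hK_abs : ∀ x y, |K x y| ≤ 1) (p : Measure 𝒳) [IsProbabilityMeasure p] {ν : ℝ}
    (hKν : ∫ x, ∫ y, K x y ^ 2 ∂p ∂p ≤ ν) {nX nY : ℕ} {a : ℝ} (haX : a + 1 ≤ nX)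
    (haY : a + 1 ≤ nY) {lam : ℝ} (hlam : 0 ≤ lam) (hlam_lt : lam < 3 * √(a * ν)) :
    1 - ENNReal.ofReal (3 * exp (-lam ^ 2 / 8)) ≤
      ((Measure.pi fun _ : Fin nX ↦ p).prod (Measure.pi fun _ : Fin nY ↦ p))
        {ω | mmdStat K nX nY ω ≤ 4 / a + 4 * lam * √(ν / a)} := by
  have ⟨ha, hν⟩ : 0 < a ∧ 0 < ν := by
    have h_sqrt : 0 < √(a * ν) := by linarith
    have hν0 : 0 ≤ ν := (integral_nonneg fun _ ↦ integral_nonneg fun _ ↦ sq_nonneg _).trans hKν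
    have ha := pos_of_mul_pos_left (sqrt_pos.1 h_sqrt) hν0
    exact ⟨ha, pos_of_mul_pos_right (sqrt_pos.1 h_sqrt) ha.le⟩
  set t := lam * √(ν / a) with ht_def
  have ht_sq : a * t ^ 2 = lam ^ 2 * ν := by
    rw [ht_def, mul_pow, sq_sqrt (by positivity)]
    field_simp
  have hKν_prod : ∫ z, K z.1 z.2 ^ 2 ∂p.prod p ≤ ν := by
    rwa [integral_prod]
    exact (MemLp.of_bound (p := 2) hK.aestronglyMeasurable 1
      (ae_of_all _ fun z ↦ hK_abs z.1 z.2)).integrable_sq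
  have hX_law := hasLaw_sumElim_pi fun _ : Fin nX ⊕ Fin nY ↦ p
  have hX (i : Fin nX ⊕ Fin nY) := (measurePreserving_eval (fun _ ↦ p) i).hasLaw.comp hX_law
  have h_tail := measureReal_mmdStat_gt_le (by exact_mod_cast (by linarith : (0 : ℝ) < nX))
    (by exact_mod_cast (by linarith : (0 : ℝ) < nY)) hX ((iIndepFun_iff_hasLaw_pi_pi hX).2 hX_law)
    hK hK_abs hν hKν_prod (by positivity) (mul_sqrt_div_le ha hν.le hlam_lt.le)
  refine one_sub_ofReal_le_measure <| (measureReal_mono fun ω hω ↦ ?_).trans <| h_tail.trans ?_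
  · rw [Set.mem_compl_iff, Set.mem_ofPred_eq, not_le] at hω
    refine lt_of_le_of_lt ?_ hω
    calc 2 / (nX : ℝ) + 2 / nY + 4 * t ≤ 2 / a + 2 / a + 4 * t := by
          gcongr <;> linarith
      _ = 4 / a + 4 * lam * √(ν / a) := by ring
  · have h_min : a / 2 ≤ (min nX nY : ℕ) := by
      rw [Nat.cast_min, le_min_iff]
      constructor <;> linarith
    linarith [exp_neg_mul_sq_div_le hν (half_le_natCast_half haX) ht_sq,
      exp_neg_mul_sq_div_le hν (half_le_natCast_half haY) ht_sq,
      exp_neg_mul_sq_div_le hν h_min ht_sq]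

end Concentration

/-- Proposition B.1 part 1: under `H₀ : p = q`, for `0 < λ < 3√(cνn)`,
with probability at least `1 − 3e^{−λ²/8}`, `T̂ ≤ 4/(cn) + 4λ√(ν/(cn))`. -/
theorem mmd_concentration_H0
    {d : ℕ} (𝒳 : Set (EuclideanSpace ℝ (Fin d))) (h𝒳 : MeasurableSet 𝒳)
    (K : 𝒳 → 𝒳 → ℝ)
    (hKmeas : Measurable (Function.uncurry K))
    (hKsym : ∀ x y, K x y = K y x)
    (hKpsd : ∀ (m : ℕ) (z : Fin m → 𝒳) (a : Fin m → ℝ),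
      0 ≤ ∑ i, ∑ j, a i * a j * K (z i) (z j))
    (hKbdd : ∀ x y, |K x y| ≤ 1)
    (p q : Measure 𝒳) [IsProbabilityMeasure p] [IsProbabilityMeasure q]
    (ν : ℝ) (hν1 : ν ≤ 1)
    (hνpp : ∫ x, ∫ y, (K x y)^2 ∂p ∂p ≤ ν)
    (hνpq : ∫ x, ∫ y, (K x y)^2 ∂q ∂p ≤ ν)
    (hνqq : ∫ x, ∫ y, (K x y)^2 ∂q ∂q ≤ ν)
    (nX nY : ℕ) (c : ℝ) (hc : 0 < c) (hc1 : c < 1)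
    (hbalX : c * ((nX + nY : ℕ) : ℝ) + 1 ≤ (nX : ℝ))
    (hbalY : c * ((nX + nY : ℕ) : ℝ) + 1 ≤ (nY : ℝ))
    (hH0 : p = q)
    (lam : ℝ) (hlam : 0 < lam)
    (hlam' : lam < 3 * Real.sqrt (c * ν * ((nX + nY : ℕ) : ℝ))) :
    1 - ENNReal.ofReal (3 * Real.exp (-lam^2 / 8)) ≤
      ((Measure.pi fun _ : Fin nX => p).prod (Measure.pi fun _ : Fin nY => q))
        {ω : (Fin nX → 𝒳) × (Fin nY → 𝒳) |
          mmdStat K nX nY ω ≤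
            4/(c * ((nX + nY : ℕ) : ℝ))
            + 4 * lam * Real.sqrt (ν/(c * ((nX + nY : ℕ) : ℝ)))} := by
  subst hH0
  exact mmd_concentration_H0_general hKmeas hKbdd p hνpp hbalX hbalY hlam.le
    (by rwa [mul_right_comm] at hlam')
end

section
/- (Proposition B.1, part 2: concentration of T̂ under H1.) Assume p ≠ q with δ_K > 0. Then for any 0 < λ < 3 √(c ν n), with probability at least 1 − 3 e^{−λ²/8} under the product law p^{⊗n_X} ⊗ q^{⊗n_Y}, T̂ ≥ δ_K − 4 λ √(ν/(c n)). -/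
open MeasureTheory Real
open scoped BigOperators ENNReal

/-- The squared population MMD `δ_K = ∬ K d(p−q)d(p−q)`, written out as
`∬K dp dp − 2∬K dp dq + ∬K dq dq`. -/
noncomputable def deltaK {𝒳 : Type*} [MeasurableSpace 𝒳] (K : 𝒳 → 𝒳 → ℝ)
    (p q : Measure 𝒳) : ℝ :=
  (∫ x, ∫ y, K x y ∂p ∂p) - 2 * (∫ x, ∫ y, K x y ∂q ∂p) + (∫ x, ∫ y, K x y ∂q ∂q)

/-!
A positive semidefinite kernel is `K x y = ⟪φ x, φ y⟫` for a feature map `φ` into a Hilbert space,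
so with the mean embeddings `m_p`, `m_q` and the sample means `m̂_X`, `m̂_Y` of `φ` one has
`δ_K = ‖m_p - m_q‖²` and `T̂ = ‖m̂_X - m̂_Y‖²`. Putting `g = m_p - m_q`, the inequality
`‖a‖² ≥ 2⟪a, g⟫ - ‖g‖²` at `a = m̂_X - m̂_Y` bounds `T̂` below by an affine function of the
difference of the two sample means of the single bounded function `x ↦ ⟪φ x, g⟫`. By Jensen, the
second moments of this function are at most `4ν`, and a Bernstein-type Chernoff bound concludes.
-/

section FeatureMap

open scoped RealInnerProductSpace

lemma posSemidef_of_forall_fin {α : Type*} {K : α → α → ℝ} (hKsym : ∀ x y, K x y = K y x)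
    (hKpsd : ∀ (m : ℕ) (z : Fin m → α) (a : Fin m → ℝ),
      0 ≤ ∑ i, ∑ j, a i * a j * K (z i) (z j)) :
    (Matrix.of K).PosSemidef := by
  refine ⟨Matrix.IsHermitian.ext fun x y => hKsym y x, fun v => ?_⟩
  let e := v.support.equivFin.symm
  have sum_eq (f : α → ℝ) : ∑ x ∈ v.support, f x = ∑ i, f (e i) := by
    rw [e.sum_comp (fun x => f x), Finset.sum_coe_sort]
  simpa only [Finsupp.sum, sum_eq, star_trivial, Matrix.of_apply, mul_right_comm] using
    hKpsd _ (fun i => e i) (fun i => v (e i))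

lemma posSemidef_smul_one {α : Type*} {K : Matrix α α ℝ} (hK : K.PosSemidef) :
    (K.map fun k => k • (1 : ℝ →L[ℝ] ℝ)).PosSemidef := by
  have posSemidef_iff := (RKHS.posSemidef_tfae (K := K.map fun k => k • (1 : ℝ →L[ℝ] ℝ))).out 0 2
  refine posSemidef_iff.2 ⟨?_, fun v => ?_⟩
  · refine Matrix.IsHermitian.ext fun x y => ?_
    simp only [Matrix.map_apply, star_smul, star_one, star_trivial, ← hK.isHermitian.apply x y]
  · refine (hK.2 v).trans_eq ?_
    simp only [Finsupp.sum, Matrix.map_apply, star_trivial, map_sum]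
    refine Finset.sum_congr rfl fun x _ => Finset.sum_congr rfl fun y _ => ?_
    simp only [RCLike.re_to_real, smul_apply, one_apply_eq_self, smul_eq_mul, RCLike.inner_apply,
      conj_trivial, ← hK.isHermitian.apply x y, star_trivial]
    ring

theorem exists_featureMap.{u} {α : Type u} {K : Matrix α α ℝ} (hK : K.PosSemidef) :
    ∃ (H : Type u) (_ : NormedAddCommGroup H) (_ : InnerProductSpace ℝ H) (_ : CompleteSpace H)
      (φ : α → H), (∀ x y, ⟪φ x, φ y⟫ = K x y) ∧
        Dense (Submodule.span ℝ (Set.range φ) : Set H) := by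
  have : Fact (K.map fun k => k • (1 : ℝ →L[ℝ] ℝ)).PosSemidef := ⟨posSemidef_smul_one hK⟩
  let H := RKHS.OfKernel (K.map fun k => k • (1 : ℝ →L[ℝ] ℝ))
  refine ⟨H, inferInstance, inferInstance, inferInstance, fun x => RKHS.kerFun H x 1, ?_, ?_⟩
  · intro x y
    rw [← RKHS.kernel_inner, RKHS.OfKernel.kernel_ofKernel]
    simp [← hK.isHermitian.apply x y]
  · rw [Submodule.dense_iff_topologicalClosure_eq_top, eq_top_iff, ← RKHS.kerFun_dense H]
    refine Submodule.topologicalClosure_mono (Submodule.span_le.2 ?_)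
    rintro _ ⟨x, v, rfl⟩
    have : RKHS.kerFun H x v = v • RKHS.kerFun H x 1 := by rw [← map_smul, smul_eq_mul, mul_one]
    rw [this]
    exact Submodule.smul_mem _ v (Submodule.subset_span ⟨x, rfl⟩)

variable {α H : Type*} [NormedAddCommGroup H] [InnerProductSpace ℝ H] {φ : α → H}

lemma mmdStat_eq_norm_sub_sq {nX nY : ℕ} (ω : (Fin nX → α) × (Fin nY → α)) :
    mmdStat (fun x y => ⟪φ x, φ y⟫) nX nY ω =
      ‖(nX : ℝ)⁻¹ • ∑ i, φ (ω.1 i) - (nY : ℝ)⁻¹ • ∑ j, φ (ω.2 j)‖ ^ 2 := by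
  rw [norm_sub_sq_real, ← real_inner_self_eq_norm_sq, ← real_inner_self_eq_norm_sq]
  simp only [mmdStat, real_inner_smul_left, sum_inner]
  simp only [real_inner_smul_right, inner_sum, ← Finset.mul_sum]
  ring

lemma two_mul_sub_le_mmdStat {nX nY : ℕ} (g : H) (ω : (Fin nX → α) × (Fin nY → α)) :
    2 * ((nX : ℝ)⁻¹ * ∑ i, ⟪φ (ω.1 i), g⟫ - (nY : ℝ)⁻¹ * ∑ j, ⟪φ (ω.2 j), g⟫) - ‖g‖ ^ 2 ≤
      mmdStat (fun x y => ⟪φ x, φ y⟫) nX nY ω := by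
  set a := (nX : ℝ)⁻¹ • ∑ i, φ (ω.1 i) - (nY : ℝ)⁻¹ • ∑ j, φ (ω.2 j) with ha
  have inner_a : ⟪a, g⟫ = (nX : ℝ)⁻¹ * ∑ i, ⟪φ (ω.1 i), g⟫ - (nY : ℝ)⁻¹ * ∑ j, ⟪φ (ω.2 j), g⟫ := by
    simp only [ha, inner_sub_left, real_inner_smul_left, sum_inner]
  rw [mmdStat_eq_norm_sub_sq, ← ha, ← inner_a]
  linarith [norm_sub_sq_real a g, sq_nonneg ‖a - g‖]

lemma norm_inner_le_mul {C : ℝ} (hC : ∀ x, ‖φ x‖ ≤ C) (f : H) (x : α) : ‖⟪φ x, f⟫‖ ≤ C * ‖f‖ :=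
  (norm_inner_le_norm (φ x) f).trans (by gcongr; exact hC x)

variable [MeasurableSpace α] {C : ℝ}

lemma measurable_inner_of_dense_span
    (hdense : Dense (Submodule.span ℝ (Set.range φ) : Set H))
    (hφ : ∀ y, Measurable fun x => ⟪φ x, φ y⟫) (f : H) : Measurable fun x => ⟪φ x, f⟫ := by
  refine hdense.induction (P := fun f => Measurable fun x => ⟪φ x, f⟫) (fun f hf => ?_) ?_ f
  · induction hf using Submodule.span_induction with
    | mem f hf =>
      obtain ⟨y, rfl⟩ := hf
      exact hφ y
    | zero => simp only [inner_zero_right, measurable_const]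
    | add f g _ _ hf hg =>
      simp only [inner_add_right]
      exact hf.add hg
    | smul a f _ hf =>
      simp only [real_inner_smul_right]
      exact hf.const_mul a
  · refine IsSeqClosed.isClosed fun u f hu huf => ?_
    exact measurable_of_tendsto_metrizable hu
      (tendsto_pi_nhds.2 fun x => tendsto_const_nhds.inner huf)

/-- `m` is the kernel mean embedding of `μ` along the feature map `φ`, i.e. the weak (Pettis)
integral of `φ`. The weak form avoids strong measurability of `φ`, which may fail when `H` is not
separable. -/
def IsMeanEmbedding (φ : α → H) (μ : Measure α) (m : H) : Prop :=
  ∀ f, ⟪f, m⟫ = ∫ x, ⟪φ x, f⟫ ∂μ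

theorem exists_isMeanEmbedding [CompleteSpace H] (μ : Measure α) [IsFiniteMeasure μ]
    (hφ : ∀ f, Measurable fun x => ⟪φ x, f⟫) (hC : ∀ x, ‖φ x‖ ≤ C) :
    ∃ m, IsMeanEmbedding φ μ m := by
  have inner_le (f : H) : ∀ᵐ x ∂μ, ‖⟪φ x, f⟫‖ ≤ C * ‖f‖ :=
    .of_forall (norm_inner_le_mul hC f)
  have hint (f : H) : Integrable (fun x => ⟪φ x, f⟫) μ :=
    .of_bound (hφ f).aestronglyMeasurable _ (inner_le f)
  let I : H →ₗ[ℝ] ℝ :=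
    { toFun := fun f => ∫ x, ⟪φ x, f⟫ ∂μ
      map_add' := fun f g => by
        simp only [inner_add_right, integral_add (hint f) (hint g)]
      map_smul' := fun a f => by
        simp only [real_inner_smul_right, integral_const_mul, RingHom.id_apply, smul_eq_mul] }
  have I_le (f : H) : ‖I f‖ ≤ C * μ.real Set.univ * ‖f‖ :=
    (norm_integral_le_of_norm_le_const (inner_le f)).trans_eq (mul_right_comm C ‖f‖ _)
  refine ⟨(InnerProductSpace.toDual ℝ H).symm (I.mkContinuous _ I_le), fun f => ?_⟩
  rw [real_inner_comm, InnerProductSpace.toDual_symm_apply]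
  rfl

namespace IsMeanEmbedding

variable {μ ρ : Measure α} {m m' : H}

lemma inner_apply (hm : IsMeanEmbedding φ μ m) (x : α) : ⟪φ x, m⟫ = ∫ y, ⟪φ x, φ y⟫ ∂μ := by
  simp only [hm (φ x), real_inner_comm]

lemma abs_inner_le [IsProbabilityMeasure μ] {B : ℝ} (hm : IsMeanEmbedding φ μ m)
    (hB : ∀ x y, |⟪φ x, φ y⟫| ≤ B) (x : α) : |⟪φ x, m⟫| ≤ B := by
  rw [hm.inner_apply]
  have norm_le (y : α) : ‖⟪φ x, φ y⟫‖ ≤ B := hB x y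
  simpa only [probReal_univ, mul_one, norm_eq_abs] using
    norm_integral_le_of_norm_le_const (μ := μ) (.of_forall norm_le)

lemma inner_eq_integral_integral (hm : IsMeanEmbedding φ μ m) (hm' : IsMeanEmbedding φ ρ m') :
    ⟪m, m'⟫ = ∫ x, ∫ y, ⟪φ x, φ y⟫ ∂ρ ∂μ := by
  rw [real_inner_comm, hm m']
  simp only [hm'.inner_apply]

lemma deltaK_eq_norm_sub_sq (hm : IsMeanEmbedding φ μ m) (hm' : IsMeanEmbedding φ ρ m') :
    deltaK (fun x y => ⟪φ x, φ y⟫) μ ρ = ‖m - m'‖ ^ 2 := by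
  rw [norm_sub_sq_real, ← real_inner_self_eq_norm_sq, ← real_inner_self_eq_norm_sq,
    hm.inner_eq_integral_integral hm, hm.inner_eq_integral_integral hm',
    hm'.inner_eq_integral_integral hm', deltaK]

lemma integral_inner_sub (hm : IsMeanEmbedding φ μ m) (hm' : IsMeanEmbedding φ ρ m') :
    (∫ x, ⟪φ x, m - m'⟫ ∂μ) - ∫ x, ⟪φ x, m - m'⟫ ∂ρ = ‖m - m'‖ ^ 2 := by
  rw [← hm, ← hm', ← inner_sub_right, real_inner_self_eq_norm_sq]

section SecondMoment

variable {r : Measure α} [IsProbabilityMeasure μ] [IsProbabilityMeasure ρ]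
  [IsProbabilityMeasure r] {B ν : ℝ}

lemma sq_inner_le (hm : IsMeanEmbedding φ μ m)
    (hmeas : Measurable (Function.uncurry fun x y => ⟪φ x, φ y⟫))
    (hB : ∀ x y, |⟪φ x, φ y⟫| ≤ B) (x : α) : ⟪φ x, m⟫ ^ 2 ≤ ∫ y, ⟪φ x, φ y⟫ ^ 2 ∂μ := by
  have hmem : MemLp (fun y => ⟪φ x, φ y⟫) 2 μ :=
    .of_bound hmeas.of_uncurry_left.aestronglyMeasurable B (.of_forall (hB x))
  have hvar := ProbabilityTheory.variance_nonneg (fun y => ⟪φ x, φ y⟫) μ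
  rw [ProbabilityTheory.variance_eq_sub hmem] at hvar
  rw [hm.inner_apply]
  exact sub_nonneg.1 hvar

lemma integral_sq_inner_sub_le (hm : IsMeanEmbedding φ μ m) (hm' : IsMeanEmbedding φ ρ m')
    (hmeas : Measurable (Function.uncurry fun x y => ⟪φ x, φ y⟫))
    (hB : ∀ x y, |⟪φ x, φ y⟫| ≤ B) (hμ : ∫ x, ∫ y, ⟪φ x, φ y⟫ ^ 2 ∂μ ∂r ≤ ν)
    (hρ : ∫ x, ∫ y, ⟪φ x, φ y⟫ ^ 2 ∂ρ ∂r ≤ ν) :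
    ∫ x, ⟪φ x, m - m'⟫ ^ 2 ∂r ≤ 4 * ν := by
  have integrable_sq (κ : Measure α) [IsProbabilityMeasure κ] :
      Integrable (fun x => ∫ y, ⟪φ x, φ y⟫ ^ 2 ∂κ) r := by
    refine Integrable.integral_prod_left (f := fun z : α × α => ⟪φ z.1, φ z.2⟫ ^ 2) ?_
    refine .of_bound (hmeas.pow_const 2).aestronglyMeasurable (B ^ 2) (.of_forall fun z => ?_)
    rw [norm_pow]
    exact pow_le_pow_left₀ (norm_nonneg _) (hB z.1 z.2) 2
  have sq_le (x : α) : ⟪φ x, m - m'⟫ ^ 2 ≤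
      2 * ∫ y, ⟪φ x, φ y⟫ ^ 2 ∂μ + 2 * ∫ y, ⟪φ x, φ y⟫ ^ 2 ∂ρ := by
    rw [inner_sub_right]
    nlinarith [hm.sq_inner_le hmeas hB x, hm'.sq_inner_le hmeas hB x,
      sq_nonneg (⟪φ x, m⟫ + ⟪φ x, m'⟫)]
  calc ∫ x, ⟪φ x, m - m'⟫ ^ 2 ∂r
      ≤ ∫ x, (2 * ∫ y, ⟪φ x, φ y⟫ ^ 2 ∂μ + 2 * ∫ y, ⟪φ x, φ y⟫ ^ 2 ∂ρ) ∂r :=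
        integral_mono_of_nonneg (.of_forall fun x => sq_nonneg _)
          (((integrable_sq μ).const_mul 2).add ((integrable_sq ρ).const_mul 2)) (.of_forall sq_le)
    _ = 2 * ∫ x, ∫ y, ⟪φ x, φ y⟫ ^ 2 ∂μ ∂r + 2 * ∫ x, ∫ y, ⟪φ x, φ y⟫ ^ 2 ∂ρ ∂r := by
        rw [integral_add ((integrable_sq μ).const_mul 2) ((integrable_sq ρ).const_mul 2),
          integral_const_mul, integral_const_mul]
    _ ≤ 4 * ν := by linarith

end SecondMoment

end IsMeanEmbedding

end FeatureMap

section TwoSampleTail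

open ProbabilityTheory

theorem mgf_le_exp_of_abs_le {Ω : Type*} [MeasurableSpace Ω] {μ : Measure Ω}
    [IsProbabilityMeasure μ] {X : Ω → ℝ} {M t : ℝ} (hX : AEStronglyMeasurable X μ)
    (hM : ∀ᵐ x ∂μ, |X x| ≤ M) (ht : |t| * M ≤ 1) :
    mgf X μ t ≤ exp (t * ∫ x, X x ∂μ + t ^ 2 * ∫ x, X x ^ 2 ∂μ) := by
  have X_mem : MemLp X 2 μ := .of_bound hX M hM
  have X_int : Integrable (fun x => t * X x) μ := (X_mem.integrable one_le_two).const_mul t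
  have sq_int : Integrable (fun x => (t * X x) ^ 2) μ := by
    simpa only [mul_pow] using X_mem.integrable_sq.const_mul (t ^ 2)
  have exp_le : ∀ᵐ x ∂μ, exp (t * X x) ≤ t * X x + 1 + (t * X x) ^ 2 := by
    filter_upwards [hM] with x hx
    have abs_le : |t * X x| ≤ 1 := by
      rw [abs_mul]
      exact (mul_le_mul_of_nonneg_left hx (abs_nonneg t)).trans ht
    linarith [le_of_abs_le (abs_exp_sub_one_sub_id_le abs_le)]
  calc mgf X μ t
      ≤ ∫ x, (t * X x + 1 + (t * X x) ^ 2) ∂μ :=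
        integral_mono_of_nonneg (.of_forall fun x => (exp_pos _).le)
          ((X_int.add (integrable_const 1)).add sq_int) exp_le
    _ = (t * ∫ x, X x ∂μ + t ^ 2 * ∫ x, X x ^ 2 ∂μ) + 1 := by
        rw [integral_add (by fun_prop) sq_int, integral_add X_int (integrable_const 1)]
        simp only [mul_pow, integral_const_mul, integral_const, probReal_univ, one_smul]
        ring
    _ ≤ _ := add_one_le_exp _

lemma abs_sampleMean_le {α : Type*} {f : α → ℝ} {M : ℝ} {n : ℕ} (hn : 0 < n) (hM : ∀ x, |f x| ≤ M)
    (x : Fin n → α) : |(n : ℝ)⁻¹ * ∑ i, f (x i)| ≤ M := by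
  have n_pos : (0 : ℝ) < n := Nat.cast_pos.2 hn
  rw [abs_mul, abs_of_pos (inv_pos.2 n_pos), inv_mul_le_iff₀ n_pos]
  simpa using (Finset.abs_sum_le_sum_abs _ _).trans
    (Finset.sum_le_card_nsmul Finset.univ _ M fun i _ => hM (x i))

variable {α : Type*} [MeasurableSpace α] {p q : Measure α} {f : α → ℝ} {M V : ℝ}

lemma mgf_sum_pi {ι : Type*} [Fintype ι] [SigmaFinite p] (f : α → ℝ) (t : ℝ) :
    mgf (fun x : ι → α => ∑ i, f (x i)) (Measure.pi fun _ => p) t =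
      mgf f p t ^ Fintype.card ι := by
  simp only [mgf, Finset.mul_sum, exp_sum]
  exact integral_fintype_prod_eq_pow fun x => exp (t * f x)

lemma mgf_add_prod {β : Type*} [MeasurableSpace β] {r : Measure β} [SFinite p] [SFinite r]
    (f : α → ℝ) (g : β → ℝ) (t : ℝ) :
    mgf (fun z : α × β => f z.1 + g z.2) (p.prod r) t = mgf f p t * mgf g r t := by
  simp only [mgf, mul_add, exp_add]
  exact integral_prod_mul (fun x => exp (t * f x)) fun y => exp (t * g y)

lemma mgf_sampleMean_le [IsProbabilityMeasure p] {n : ℕ} {N t : ℝ} (hf : Measurable f)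
    (hM : ∀ x, |f x| ≤ M) (hV : ∫ x, f x ^ 2 ∂p ≤ V) (hN : 0 < N) (hn : N ≤ n)
    (ht : |t| * M ≤ N) :
    mgf (fun x : Fin n → α => (n : ℝ)⁻¹ * ∑ i, f (x i)) (Measure.pi fun _ => p) t ≤
      exp (t * ∫ x, f x ∂p + t ^ 2 * V / N) := by
  have n_pos : (0 : ℝ) < n := hN.trans_le hn
  have V_nonneg : 0 ≤ V := (integral_nonneg fun x => sq_nonneg (f x)).trans hV
  have scaled_le : |(n : ℝ)⁻¹ * t| * M ≤ 1 := by
    rw [abs_mul, abs_of_pos (inv_pos.2 n_pos), mul_assoc, inv_mul_le_one₀ n_pos]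
    exact ht.trans hn
  rw [mgf_const_mul, mgf_sum_pi, Fintype.card_fin]
  calc mgf f p ((n : ℝ)⁻¹ * t) ^ n
      ≤ exp ((n : ℝ)⁻¹ * t * ∫ x, f x ∂p + ((n : ℝ)⁻¹ * t) ^ 2 * ∫ x, f x ^ 2 ∂p) ^ n :=
        pow_le_pow_left₀ mgf_nonneg
          (mgf_le_exp_of_abs_le hf.aestronglyMeasurable (.of_forall hM) scaled_le) n
    _ = exp (t * ∫ x, f x ∂p + t ^ 2 * (∫ x, f x ^ 2 ∂p) / n) := by
        rw [← exp_nat_mul]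
        congr 1
        field_simp
    _ ≤ exp (t * ∫ x, f x ∂p + t ^ 2 * V / N) := by gcongr

lemma integrable_exp_sampleMean_sub [IsProbabilityMeasure p] [IsProbabilityMeasure q] {nX nY : ℕ}
    (hf : Measurable f) (hM : ∀ x, |f x| ≤ M) (hnX : 0 < nX) (hnY : 0 < nY) (t : ℝ) :
    Integrable (fun ω : (Fin nX → α) × (Fin nY → α) =>
        exp (t * ((nX : ℝ)⁻¹ * ∑ i, f (ω.1 i) - (nY : ℝ)⁻¹ * ∑ j, f (ω.2 j))))
      ((Measure.pi fun _ => p).prod (Measure.pi fun _ => q)) := by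
  refine integrable_exp_mul_of_mem_Icc (a := -(M + M)) (b := M + M) (by fun_prop)
    (.of_forall fun ω => abs_le.1 ((abs_sub _ _).trans (add_le_add ?_ ?_)))
  · exact abs_sampleMean_le hnX hM ω.1
  · exact abs_sampleMean_le hnY hM ω.2

lemma mgf_sampleMean_sub_le [IsProbabilityMeasure p] [IsProbabilityMeasure q] {nX nY : ℕ}
    {N t : ℝ} (hf : Measurable f) (hM : ∀ x, |f x| ≤ M) (hp : ∫ x, f x ^ 2 ∂p ≤ V)
    (hq : ∫ x, f x ^ 2 ∂q ≤ V) (hN : 0 < N) (hnX : N ≤ nX) (hnY : N ≤ nY) (ht : |t| * M ≤ N) :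
    mgf (fun ω : (Fin nX → α) × (Fin nY → α) =>
        (nX : ℝ)⁻¹ * ∑ i, f (ω.1 i) - (nY : ℝ)⁻¹ * ∑ j, f (ω.2 j))
      ((Measure.pi fun _ => p).prod (Measure.pi fun _ => q)) t ≤
        exp (t * (∫ x, f x ∂p - ∫ x, f x ∂q) + 2 * t ^ 2 * V / N) := by
  have mgf_X := mgf_sampleMean_le hf hM hp hN hnX ht
  have mgf_Y := mgf_sampleMean_le hf hM hq hN hnY ((abs_neg t).symm ▸ ht)
  simp only [sub_eq_add_neg]
  rw [mgf_add_prod (fun x : Fin nX → α => (nX : ℝ)⁻¹ * ∑ i, f (x i))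
    fun y : Fin nY → α => -((nY : ℝ)⁻¹ * ∑ j, f (y j))]
  refine (mul_le_mul mgf_X (mgf_neg.trans_le mgf_Y) mgf_nonneg (exp_pos _).le).trans_eq ?_
  rw [← exp_add]
  ring_nf

theorem measureReal_sampleMean_sub_le [IsProbabilityMeasure p] [IsProbabilityMeasure q] {nX nY : ℕ}
    {N ε : ℝ} (hf : Measurable f) (hM : ∀ x, |f x| ≤ M) (hp : ∫ x, f x ^ 2 ∂p ≤ V)
    (hq : ∫ x, f x ^ 2 ∂q ≤ V) (hV : 0 < V) (hN : 0 < N) (hnX : N ≤ nX) (hnY : N ≤ nY)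
    (hε : 0 ≤ ε) (hεM : ε * M ≤ 4 * V) :
    ((Measure.pi fun _ : Fin nX => p).prod (Measure.pi fun _ : Fin nY => q)).real
        {ω | (nX : ℝ)⁻¹ * ∑ i, f (ω.1 i) - (nY : ℝ)⁻¹ * ∑ j, f (ω.2 j) ≤
          ∫ x, f x ∂p - ∫ x, f x ∂q - ε} ≤
      exp (-(N * ε ^ 2 / (8 * V))) := by
  -- The minimiser of the Chernoff exponent `-θ ε + 2 θ² V / N`.
  set θ := N * ε / (4 * V) with hθ
  have θ_nonneg : 0 ≤ θ := by positivity
  have θ_mul_le : |-θ| * M ≤ N := by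
    rw [abs_neg, abs_of_nonneg θ_nonneg, hθ, div_mul_eq_mul_div, div_le_iff₀ (by positivity),
      mul_assoc]
    gcongr
  have nX_pos : 0 < nX := Nat.cast_pos.1 (hN.trans_le hnX)
  have nY_pos : 0 < nY := Nat.cast_pos.1 (hN.trans_le hnY)
  refine (measure_le_le_exp_mul_mgf _ (neg_nonpos.2 θ_nonneg)
    (integrable_exp_sampleMean_sub hf hM nX_pos nY_pos (-θ))).trans ?_
  refine (mul_le_mul_of_nonneg_left
    (mgf_sampleMean_sub_le hf hM hp hq hN hnX hnY θ_mul_le) (exp_pos _).le).trans_eq ?_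
  rw [← exp_add, hθ]
  congr 1
  field_simp
  ring

end TwoSampleTail

section Concentration

open scoped RealInnerProductSpace

variable {α : Type*} [MeasurableSpace α] {p q : Measure α} [IsProbabilityMeasure p]
  [IsProbabilityMeasure q] {nX nY : ℕ} {N ν : ℝ}

theorem IsMeanEmbedding.measureReal_mmdStat_le_deltaK_sub {H : Type*} [NormedAddCommGroup H]
    [InnerProductSpace ℝ H] {φ : α → H} {m m' : H} {ε : ℝ} (hm : IsMeanEmbedding φ p m)
    (hm' : IsMeanEmbedding φ q m') (hφ : ∀ f, Measurable fun x => ⟪φ x, f⟫)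
    (hB : ∀ x y, |⟪φ x, φ y⟫| ≤ 1)
    (hp : ∫ x, ⟪φ x, m - m'⟫ ^ 2 ∂p ≤ 4 * ν) (hq : ∫ x, ⟪φ x, m - m'⟫ ^ 2 ∂q ≤ 4 * ν)
    (hν : 0 < ν) (hN : 0 < N) (hnX : N ≤ nX) (hnY : N ≤ nY) (hε : 0 ≤ ε) (hεν : ε ≤ 16 * ν) :
    ((Measure.pi fun _ : Fin nX => p).prod (Measure.pi fun _ : Fin nY => q)).real
        {ω | mmdStat (fun x y => ⟪φ x, φ y⟫) nX nY ω ≤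
          deltaK (fun x y => ⟪φ x, φ y⟫) p q - ε} ≤
      exp (-(N * ε ^ 2 / (128 * ν))) := by
  have witness_le (x : α) : |⟪φ x, m - m'⟫| ≤ 2 := by
    rw [inner_sub_right]
    linarith [abs_sub ⟪φ x, m⟫ ⟪φ x, m'⟫, hm.abs_inner_le hB x, hm'.abs_inner_le hB x]
  refine (measureReal_mono fun ω hω => ?_).trans ((measureReal_sampleMean_sub_le (ε := ε / 2)
    (hφ (m - m')) witness_le hp hq (by positivity) hN hnX hnY (by positivity)
    (by linarith)).trans_eq ?_)
  · rw [Set.mem_ofPred_eq, hm.deltaK_eq_norm_sub_sq hm'] at hω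
    rw [Set.mem_ofPred_eq, hm.integral_inner_sub hm']
    linarith [two_mul_sub_le_mmdStat (φ := φ) (m - m') ω]
  · congr 1
    ring

theorem measureReal_mmdStat_le_deltaK_sub {K : α → α → ℝ} {ε : ℝ}
    (hKmeas : Measurable (Function.uncurry K)) (hKpsd : (Matrix.of K).PosSemidef)
    (hKbdd : ∀ x y, |K x y| ≤ 1) (hνpp : ∫ x, ∫ y, K x y ^ 2 ∂p ∂p ≤ ν)
    (hνpq : ∫ x, ∫ y, K x y ^ 2 ∂q ∂p ≤ ν) (hνqq : ∫ x, ∫ y, K x y ^ 2 ∂q ∂q ≤ ν)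
    (hν : 0 < ν) (hN : 0 < N) (hnX : N ≤ nX) (hnY : N ≤ nY) (hε : 0 ≤ ε) (hεν : ε ≤ 16 * ν) :
    ((Measure.pi fun _ : Fin nX => p).prod (Measure.pi fun _ : Fin nY => q)).real
        {ω | mmdStat K nX nY ω ≤ deltaK K p q - ε} ≤ exp (-(N * ε ^ 2 / (128 * ν))) := by
  obtain ⟨H, _, _, _, φ, hKφ, hdense⟩ := exists_featureMap hKpsd
  obtain rfl : K = fun x y => ⟪φ x, φ y⟫ := funext₂ fun x y => (hKφ x y).symm
  have hφ := measurable_inner_of_dense_span hdense fun _ => hKmeas.of_uncurry_right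
  have norm_le (x : α) : ‖φ x‖ ≤ 1 := by
    rw [← abs_norm, ← sq_le_one_iff_abs_le_one, ← real_inner_self_eq_norm_sq]
    exact le_of_abs_le (hKbdd x x)
  obtain ⟨m, hm⟩ := exists_isMeanEmbedding p hφ norm_le
  obtain ⟨m', hm'⟩ := exists_isMeanEmbedding q hφ norm_le
  have hνqp : ∫ x, ∫ y, ⟪φ x, φ y⟫ ^ 2 ∂p ∂q ≤ ν := by
    refine (integral_integral_swap ?_).trans_le ?_
    · refine .of_bound (hKmeas.pow_const 2).aestronglyMeasurable 1 (.of_forall fun z => ?_)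
      exact (norm_pow _ 2).trans_le (pow_le_one₀ (norm_nonneg _) (hKbdd z.1 z.2))
    · simpa only [real_inner_comm] using hνpq
  exact hm.measureReal_mmdStat_le_deltaK_sub hm' hφ hKbdd
    (hm.integral_sq_inner_sub_le hm' hKmeas hKbdd hνpp hνpq)
    (hm.integral_sq_inner_sub_le hm' hKmeas hKbdd hνqp hνqq) hν hN hnX hnY hε hεν

lemma one_sub_ofReal_le_measure_s11 {Ω : Type*} [MeasurableSpace Ω] {P : Measure Ω}
    [IsProbabilityMeasure P] {S : Set Ω} {t : ℝ} (h : P.real Sᶜ ≤ t) :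
    1 - ENNReal.ofReal t ≤ P S := by
  rw [tsub_le_iff_right, ← measure_univ (μ := P)]
  refine (measure_univ_le_add_compl S).trans (add_le_add_right ?_ _)
  rw [← ofReal_measureReal]
  exact ENNReal.ofReal_le_ofReal h

theorem mmd_concentration_H1_general {K : α → α → ℝ} (hKmeas : Measurable (Function.uncurry K))
    (hKpsd : (Matrix.of K).PosSemidef) (hKbdd : ∀ x y, |K x y| ≤ 1)
    (hνpp : ∫ x, ∫ y, K x y ^ 2 ∂p ∂p ≤ ν) (hνpq : ∫ x, ∫ y, K x y ^ 2 ∂q ∂p ≤ ν)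
    (hνqq : ∫ x, ∫ y, K x y ^ 2 ∂q ∂q ≤ ν) (hnX : N ≤ nX) (hnY : N ≤ nY) {lam : ℝ}
    (hlam : 0 < lam) (hlam' : lam ≤ 4 * √(ν * N)) :
    1 - ENNReal.ofReal (exp (-lam ^ 2 / 8)) ≤
      ((Measure.pi fun _ : Fin nX => p).prod (Measure.pi fun _ : Fin nY => q))
        {ω | deltaK K p q - 4 * lam * √(ν / N) ≤ mmdStat K nX nY ω} := by
  have ν_nonneg : 0 ≤ ν :=
    (integral_nonneg fun x => integral_nonneg fun y => sq_nonneg (K x y)).trans hνpp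
  have νN_pos : 0 < ν * N := sqrt_pos.1 (by linarith)
  have ν_pos : 0 < ν := ν_nonneg.lt_of_ne' (left_ne_zero_of_mul νN_pos.ne')
  have N_pos : 0 < N := (pos_iff_pos_of_mul_pos νN_pos).1 ν_pos
  have ε_le : 4 * lam * √(ν / N) ≤ 16 * ν :=
    calc 4 * lam * √(ν / N) ≤ 4 * (4 * √(ν * N)) * √(ν / N) := by gcongr
      _ = 16 * √(ν * N * (ν / N)) := by rw [sqrt_mul νN_pos.le]; ring
      _ = 16 * √(ν * ν) := by congr 2; field_simp
      _ = 16 * ν := by rw [sqrt_mul_self ν_nonneg]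
  have exponent_eq : -(N * (4 * lam * √(ν / N)) ^ 2 / (128 * ν)) = -lam ^ 2 / 8 := by
    rw [mul_pow, sq_sqrt (by positivity)]
    field_simp
    norm_num
  refine one_sub_ofReal_le_measure_s11 ?_
  rw [← exponent_eq]
  refine le_trans (measureReal_mono fun ω hω => ?_)
    (measureReal_mmdStat_le_deltaK_sub hKmeas hKpsd hKbdd hνpp hνpq hνqq ν_pos N_pos hnX hnY
      (by positivity) ε_le)
  rw [Set.mem_compl_iff, Set.mem_ofPred_eq, not_le] at hω
  exact hω.le

end Concentration

/-- Proposition B.1 part 2: under `H₁ : p ≠ q` with `δ_K > 0`, for `0 < λ < 3√(cνn)`,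
with probability at least `1 − 3e^{−λ²/8}`, `T̂ ≥ δ_K − 4λ√(ν/(cn))`. -/
theorem mmd_concentration_H1
    {d : ℕ} (𝒳 : Set (EuclideanSpace ℝ (Fin d))) (h𝒳 : MeasurableSet 𝒳)
    (K : 𝒳 → 𝒳 → ℝ)
    (hKmeas : Measurable (Function.uncurry K))
    (hKsym : ∀ x y, K x y = K y x)
    (hKpsd : ∀ (m : ℕ) (z : Fin m → 𝒳) (a : Fin m → ℝ),
      0 ≤ ∑ i, ∑ j, a i * a j * K (z i) (z j))
    (hKbdd : ∀ x y, |K x y| ≤ 1)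
    (p q : Measure 𝒳) [IsProbabilityMeasure p] [IsProbabilityMeasure q]
    (ν : ℝ) (hν1 : ν ≤ 1)
    (hνpp : ∫ x, ∫ y, (K x y)^2 ∂p ∂p ≤ ν)
    (hνpq : ∫ x, ∫ y, (K x y)^2 ∂q ∂p ≤ ν)
    (hνqq : ∫ x, ∫ y, (K x y)^2 ∂q ∂q ≤ ν)
    (nX nY : ℕ) (c : ℝ) (hc : 0 < c) (hc1 : c < 1)
    (hbalX : c * ((nX + nY : ℕ) : ℝ) + 1 ≤ (nX : ℝ))
    (hbalY : c * ((nX + nY : ℕ) : ℝ) + 1 ≤ (nY : ℝ))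
    (hH1 : p ≠ q) (hδ : 0 < deltaK K p q)
    (lam : ℝ) (hlam : 0 < lam)
    (hlam' : lam < 3 * Real.sqrt (c * ν * ((nX + nY : ℕ) : ℝ))) :
    1 - ENNReal.ofReal (3 * Real.exp (-lam^2 / 8)) ≤
      ((Measure.pi fun _ : Fin nX => p).prod (Measure.pi fun _ : Fin nY => q))
        {ω : (Fin nX → 𝒳) × (Fin nY → 𝒳) |
          deltaK K p q - 4 * lam * Real.sqrt (ν/(c * ((nX + nY : ℕ) : ℝ)))
            ≤ mmdStat K nX nY ω} := by
  refine (tsub_le_tsub_left (ENNReal.ofReal_le_ofReal ?_) 1).trans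
    (mmd_concentration_H1_general hKmeas (posSemidef_of_forall_fin hKsym hKpsd) hKbdd
      hνpp hνpq hνqq (by linarith) (by linarith) hlam ?_)
  · linarith [exp_pos (-lam ^ 2 / 8)]
  · rw [← mul_assoc, mul_comm ν c]
    linarith [sqrt_nonneg (c * ν * (nX + nY : ℕ))]
end

section
/- (Lemma B.2: concentration of the conditional mean Ĉ.) For any 0 < λ_{(1)} < 3 √(ν c_a n), P_(1)[ Ĉ − δ_K > 4 λ_{(1)} √(ν/(c_a n)) ] ≤ 4 e^{−λ_{(1)}²/4}, and likewise P_(1)[ Ĉ − δ_K < −4 λ_{(1)} √(ν/(c_a n)) ] ≤ 4 e^{−λ_{(1)}²/4}. -/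
open MeasureTheory Real
open scoped BigOperators ENNReal

/-- The exact NTK witness function `ĝ_NTK` built from the training sample
`dtr = (X₍₁₎, Y₍₁₎)`. -/
noncomputable def ntkWitness {𝒳 : Type*} (K : 𝒳 → 𝒳 → ℝ) (n1X n1Y : ℕ)
    (dtr : (Fin n1X → 𝒳) × (Fin n1Y → 𝒳)) (x : 𝒳) : ℝ :=
  (1/(n1X:ℝ)) * ∑ j, K x (dtr.1 j) - (1/(n1Y:ℝ)) * ∑ j, K x (dtr.2 j)

/-- The conditional mean `Ĉ = ∫ ĝ_NTK d(p−q) = ∫ ĝ_NTK dp − ∫ ĝ_NTK dq`. -/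
noncomputable def condMeanC {𝒳 : Type*} [MeasurableSpace 𝒳] (K : 𝒳 → 𝒳 → ℝ)
    (n1X n1Y : ℕ) (p q : Measure 𝒳)
    (dtr : (Fin n1X → 𝒳) × (Fin n1Y → 𝒳)) : ℝ :=
  (∫ x, ntkWitness K n1X n1Y dtr x ∂p) - ∫ x, ntkWitness K n1X n1Y dtr x ∂q

/-!
The conditional mean is a difference of empirical means,
`Ĉ = (1/n_X) ∑ h(xⱼ) - (1/n_Y) ∑ h(yⱼ)`, where `h(y) = ∫ K(y,x) d(p - q)(x)`, and `δ_K` is its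
expectation `∫ h dp - ∫ h dq`. By Jensen, `∫ h² ≤ 4ν` under both `p` and `q`.

The inequality `eᵘ ≤ 1 + u + u²` for `|u| ≤ 1` turns such a second-moment bound into a Gaussian-type
bound on the moment generating function, valid for parameters up to the sample size divided by
`sup |h|`. Chernoff's bound then gives the tail `exp (-4λ²/9)`; the upper limit on `λ` is what keeps
the chosen parameter in that range.
-/

section EmpiricalMean

open ProbabilityTheory

variable {α β ι κ : Type*} [MeasurableSpace α] [MeasurableSpace β] [Fintype ι] [Fintype κ]
  {f : α → ℝ} {M s : ℝ}

lemma mgf_le_exp_of_abs_le_s12 {μ : Measure α} [IsProbabilityMeasure μ] (hf : AEMeasurable f μ)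
    (hM : ∀ᵐ x ∂μ, |f x| ≤ M) (hs : |s| * M ≤ 1) :
    mgf f μ s ≤ exp (s * ∫ x, f x ∂μ + s ^ 2 * ∫ x, f x ^ 2 ∂μ) := by
  have exp_le : ∀ᵐ x ∂μ, exp (s * f x) ≤ 1 + (s * f x + s ^ 2 * f x ^ 2) := by
    filter_upwards [hM] with x hx
    have abs_le_one : |s * f x| ≤ 1 := by
      rw [abs_mul]
      exact (mul_le_mul_of_nonneg_left hx (abs_nonneg s)).trans hs
    linarith [le_of_abs_le (abs_exp_sub_one_sub_id_le abs_le_one), mul_pow s (f x) 2]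
  have memLp : MemLp f 2 μ := MemLp.of_bound hf.aestronglyMeasurable M hM
  have int_lin : Integrable (fun x ↦ s * f x) μ := (memLp.integrable one_le_two).const_mul s
  have int_sq : Integrable (fun x ↦ s ^ 2 * f x ^ 2) μ := memLp.integrable_sq.const_mul _
  calc mgf f μ s ≤ ∫ x, (1 + (s * f x + s ^ 2 * f x ^ 2)) ∂μ :=
        integral_mono_of_nonneg (ae_of_all _ fun x ↦ (exp_pos _).le)
          ((integrable_const 1).add (int_lin.add int_sq)) exp_le
    _ = s * ∫ x, f x ∂μ + s ^ 2 * ∫ x, f x ^ 2 ∂μ + 1 := by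
        rw [integral_add (integrable_const 1) (by exact int_lin.add int_sq),
          integral_add int_lin int_sq, integral_const_mul, integral_const_mul, integral_const,
          probReal_univ, one_smul, add_comm]
    _ ≤ _ := add_one_le_exp _

lemma exp_mul_expect (s : ℝ) (a : ι → ℝ) :
    exp (s * 𝔼 i, a i) = ∏ i, exp (s / Fintype.card ι * a i) := by
  rw [Fintype.expect_eq_sum_div_card, ← exp_sum, ← Finset.mul_sum]
  congr 1
  ring

lemma mgf_expect_pi (μ : Measure α) [SigmaFinite μ] (f : α → ℝ) (s : ℝ) :
    mgf (fun x : ι → α ↦ 𝔼 i, f (x i)) (Measure.pi fun _ ↦ μ) s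
      = mgf f μ (s / Fintype.card ι) ^ Fintype.card ι := by
  simp_rw [mgf, exp_mul_expect]
  exact integral_fintype_prod_eq_pow fun x ↦ exp (s / Fintype.card ι * f x)

lemma integrable_exp_mul_expect_pi {μ : Measure α} [SigmaFinite μ]
    (hf : Integrable (fun x ↦ exp (s / Fintype.card ι * f x)) μ) :
    Integrable (fun x : ι → α ↦ exp (s * 𝔼 i, f (x i))) (Measure.pi fun _ ↦ μ) := by
  simp_rw [exp_mul_expect]
  exact Integrable.fintype_prod fun _ ↦ hf

lemma mgf_expect_pi_le [Nonempty ι] {μ : Measure α} [IsProbabilityMeasure μ]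
    (hf : AEMeasurable f μ) (hM : ∀ᵐ x ∂μ, |f x| ≤ M) (hs : |s| * M ≤ Fintype.card ι) :
    mgf (fun x : ι → α ↦ 𝔼 i, f (x i)) (Measure.pi fun _ ↦ μ) s
      ≤ exp (s * ∫ x, f x ∂μ + s ^ 2 * (∫ x, f x ^ 2 ∂μ) / Fintype.card ι) := by
  have card_pos : (0 : ℝ) < Fintype.card ι := Nat.cast_pos.mpr Fintype.card_pos
  have small : |s / Fintype.card ι| * M ≤ 1 := by
    rwa [abs_div, abs_of_pos card_pos, div_mul_eq_mul_div, div_le_one card_pos]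
  rw [mgf_expect_pi]
  calc _ ≤ _ := pow_le_pow_left₀ mgf_nonneg (mgf_le_exp_of_abs_le_s12 hf hM small) _
    _ = _ := by
        rw [← exp_nat_mul]
        congr 1
        field_simp

lemma exp_mul_sub (s a b : ℝ) : exp (s * (a - b)) = exp (s * a) * exp (-s * b) := by
  rw [← exp_add]
  congr 1
  ring

lemma mgf_fst_sub_snd (μ : Measure α) (ρ : Measure β) [SFinite μ] [SFinite ρ]
    (X : α → ℝ) (Y : β → ℝ) (s : ℝ) :
    mgf (fun z ↦ X z.1 - Y z.2) (μ.prod ρ) s = mgf X μ s * mgf Y ρ (-s) := by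
  simp_rw [mgf, exp_mul_sub]
  exact integral_prod_mul (fun x ↦ exp (s * X x)) fun y ↦ exp (-s * Y y)

lemma integrable_exp_mul_fst_sub_snd {μ : Measure α} {ρ : Measure β} [SFinite ρ]
    {X : α → ℝ} {Y : β → ℝ} (hX : Integrable (fun x ↦ exp (s * X x)) μ)
    (hY : Integrable (fun y ↦ exp (-s * Y y)) ρ) :
    Integrable (fun z ↦ exp (s * (X z.1 - Y z.2))) (μ.prod ρ) := by
  simp_rw [exp_mul_sub]
  exact hX.mul_prod hY

variable {p q : Measure α} [IsProbabilityMeasure p] [IsProbabilityMeasure q] {N v lam : ℝ}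

lemma mgf_expect_sub_expect_le (hf : Measurable f) (hM : ∀ x, |f x| ≤ M) (hN : 0 < N)
    (hι : N ≤ Fintype.card ι) (hκ : N ≤ Fintype.card κ)
    (hp : ∫ x, f x ^ 2 ∂p ≤ v) (hq : ∫ x, f x ^ 2 ∂q ≤ v) (hs : |s| * M ≤ N) :
    mgf (fun z : (ι → α) × (κ → α) ↦ 𝔼 i, f (z.1 i) - 𝔼 j, f (z.2 j))
        ((Measure.pi fun _ ↦ p).prod (Measure.pi fun _ ↦ q)) s
      ≤ exp (s * (∫ x, f x ∂p - ∫ x, f x ∂q) + 2 * v * s ^ 2 / N) := by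
  have : Nonempty ι := Fintype.card_pos_iff.mp (Nat.cast_pos.mp (hN.trans_le hι))
  have : Nonempty κ := Fintype.card_pos_iff.mp (Nat.cast_pos.mp (hN.trans_le hκ))
  have v_nonneg : 0 ≤ v := (integral_nonneg fun x ↦ sq_nonneg (f x)).trans hp
  have mgf_p := mgf_expect_pi_le (ι := ι) hf.aemeasurable (ae_of_all p hM) (hs.trans hι)
  have mgf_q := mgf_expect_pi_le (ι := κ) (s := -s) hf.aemeasurable (ae_of_all q hM)
    (by rw [abs_neg]; exact hs.trans hκ)
  have var_p : s ^ 2 * (∫ x, f x ^ 2 ∂p) / Fintype.card ι ≤ s ^ 2 * v / N := by gcongr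
  have var_q : s ^ 2 * (∫ x, f x ^ 2 ∂q) / Fintype.card κ ≤ s ^ 2 * v / N := by gcongr
  rw [mgf_fst_sub_snd _ _ (fun x : ι → α ↦ 𝔼 i, f (x i)) fun y : κ → α ↦ 𝔼 j, f (y j)]
  refine (mul_le_mul mgf_p mgf_q mgf_nonneg (exp_pos _).le).trans ?_
  rw [← exp_add, exp_le_exp, neg_sq]
  linear_combination var_p + var_q

lemma measureReal_expect_sub_expect_ge_le (hf : Measurable f) (hM : ∀ x, |f x| ≤ M) (hN : 0 < N)
    (hι : N ≤ Fintype.card ι) (hκ : N ≤ Fintype.card κ)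
    (hp : ∫ x, f x ^ 2 ∂p ≤ v) (hq : ∫ x, f x ^ 2 ∂q ≤ v)
    (hs₀ : 0 ≤ s) (hs : s * M ≤ N) (ε : ℝ) :
    ((Measure.pi fun _ ↦ p).prod (Measure.pi fun _ ↦ q)).real
        {z : (ι → α) × (κ → α) |
          ε ≤ 𝔼 i, f (z.1 i) - 𝔼 j, f (z.2 j) - (∫ x, f x ∂p - ∫ x, f x ∂q)}
      ≤ exp (-s * ε + 2 * v * s ^ 2 / N) := by
  have int_exp (μ : Measure α) [IsProbabilityMeasure μ] (t : ℝ) :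
      Integrable (fun x ↦ exp (t * f x)) μ :=
    integrable_exp_mul_of_mem_Icc hf.aemeasurable (ae_of_all _ fun x ↦ abs_le.mp (hM x))
  have chernoff := measure_ge_le_exp_mul_mgf (ε + (∫ x, f x ∂p - ∫ x, f x ∂q)) hs₀
    (integrable_exp_mul_fst_sub_snd (integrable_exp_mul_expect_pi (ι := ι) (int_exp p _))
      (integrable_exp_mul_expect_pi (ι := κ) (int_exp q _)))
  simp_rw [le_sub_iff_add_le (b := ∫ x, f x ∂p - ∫ x, f x ∂q)]
  refine chernoff.trans <| (mul_le_mul_of_nonneg_left (mgf_expect_sub_expect_le hf hM hN hι hκ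
    hp hq (by rwa [abs_of_nonneg hs₀])) (exp_pos _).le).trans_eq ?_
  rw [← exp_add]
  congr 1
  ring

lemma measureReal_expect_sub_expect_ge_le_exp_sq (hf : Measurable f) (hM : ∀ x, |f x| ≤ M)
    (hN : 0 < N) (hι : N ≤ Fintype.card ι) (hκ : N ≤ Fintype.card κ) (hv : 0 < v)
    (hp : ∫ x, f x ^ 2 ∂p ≤ v) (hq : ∫ x, f x ^ 2 ∂q ≤ v)
    (hlam₀ : 0 ≤ lam) (hlam : M * lam ≤ 3 * √(v * N)) :
    ((Measure.pi fun _ ↦ p).prod (Measure.pi fun _ ↦ q)).real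
        {z : (ι → α) × (κ → α) | 2 * lam * √(v / N)
          ≤ 𝔼 i, f (z.1 i) - 𝔼 j, f (z.2 j) - (∫ x, f x ∂p - ∫ x, f x ∂q)}
      ≤ exp (-(4 / 9) * lam ^ 2) := by
  have sqrt_pos : 0 < √(v * N) := Real.sqrt_pos.mpr (mul_pos hv hN)
  -- The exponent is minimal at `lam * N / (2 * √(v * N))`, which may violate `s * M ≤ N`.
  let s := lam * N / (3 * √(v * N))
  have s_mul_M_le : s * M ≤ N := by
    rw [div_mul_eq_mul_div, div_le_iff₀ (mul_pos three_pos sqrt_pos)]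
    nlinarith
  refine (measureReal_expect_sub_expect_ge_le hf hM hN hι hκ hp hq (by positivity)
    s_mul_M_le _).trans_eq ?_
  have s_mul_sqrt : s * √(v / N) = lam / 3 := by
    rw [Real.sqrt_div' v hN.le, div_mul_div_comm, Real.sqrt_mul hv.le]
    field_simp
    rw [sq_sqrt hN.le]
  have s_sq : v * s ^ 2 / N = lam ^ 2 / 9 := by
    rw [div_pow, mul_pow, mul_pow, sq_sqrt (mul_pos hv hN).le]
    field_simp
    norm_num
  congr 1
  linear_combination (-2 * lam) * s_mul_sqrt + 2 * s_sq

lemma measureReal_expect_sub_expect_le_neg_le_exp_sq (hf : Measurable f) (hM : ∀ x, |f x| ≤ M)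
    (hN : 0 < N) (hι : N ≤ Fintype.card ι) (hκ : N ≤ Fintype.card κ) (hv : 0 < v)
    (hp : ∫ x, f x ^ 2 ∂p ≤ v) (hq : ∫ x, f x ^ 2 ∂q ≤ v)
    (hlam₀ : 0 ≤ lam) (hlam : M * lam ≤ 3 * √(v * N)) :
    ((Measure.pi fun _ ↦ p).prod (Measure.pi fun _ ↦ q)).real
        {z : (ι → α) × (κ → α) |
          𝔼 i, f (z.1 i) - 𝔼 j, f (z.2 j) - (∫ x, f x ∂p - ∫ x, f x ∂q) ≤ -(2 * lam * √(v / N))}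
      ≤ exp (-(4 / 9) * lam ^ 2) := by
  have upper := measureReal_expect_sub_expect_ge_le_exp_sq (ι := ι) (κ := κ) (p := p) (q := q)
    hf.neg (by simpa using hM) hN hι hκ hv (by simpa using hp) (by simpa using hq) hlam₀ hlam
  convert upper using 4 with z
  simp only [Pi.neg_apply, Finset.expect_neg_distrib, integral_neg]
  constructor <;> intro _ <;> linarith

end EmpiricalMean

lemma sqrt_four_mul (t : ℝ) : √(4 * t) = 2 * √t := by
  rw [sqrt_mul zero_le_four, show (4 : ℝ) = 2 ^ 2 by norm_num, sqrt_sq zero_le_two]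

lemma abs_sq_le_sq {t B : ℝ} (ht : |t| ≤ B) : |t ^ 2| ≤ B ^ 2 := by
  rw [abs_pow]
  exact pow_le_pow_left₀ (abs_nonneg t) ht 2

section Kernel

variable {α : Type*} [MeasurableSpace α] {K : α → α → ℝ} {B : ℝ}

/-- The population witness function `h(y) = ∫ K(y, x) d(p - q)(x)` of the maximum mean discrepancy
between `p` and `q`, the population counterpart of `ntkWitness`. -/
noncomputable def mmdWitness (K : α → α → ℝ) (p q : Measure α) (y : α) : ℝ :=
  (∫ x, K y x ∂p) - ∫ x, K y x ∂q

lemma measurable_integral_kernel (hKm : Measurable (Function.uncurry K)) (p : Measure α)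
    [SFinite p] : Measurable fun y ↦ ∫ x, K y x ∂p :=
  (hKm.stronglyMeasurable.integral_prod_right (ν := p)).measurable

lemma measurable_mmdWitness (hKm : Measurable (Function.uncurry K)) (p q : Measure α)
    [SFinite p] [SFinite q] : Measurable (mmdWitness K p q) :=
  (measurable_integral_kernel hKm p).sub (measurable_integral_kernel hKm q)

lemma sq_integral_le_integral_sq {μ : Measure α} [IsProbabilityMeasure μ] {f : α → ℝ}
    (hf : MemLp f 2 μ) : (∫ x, f x ∂μ) ^ 2 ≤ ∫ x, f x ^ 2 ∂μ := by
  simpa [ProbabilityTheory.variance_eq_sub hf] using ProbabilityTheory.variance_nonneg f μ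

variable (p q m : Measure α) [IsProbabilityMeasure p] [IsProbabilityMeasure q]
  [IsFiniteMeasure m]

lemma abs_integral_kernel_le (hKb : ∀ x y, |K x y| ≤ B) (y : α) : |∫ x, K y x ∂p| ≤ B := by
  simpa using norm_integral_le_of_norm_le_const (μ := p) (f := K y) (ae_of_all _ (hKb y))

lemma integrable_integral_kernel (hKm : Measurable (Function.uncurry K))
    (hKb : ∀ x y, |K x y| ≤ B) : Integrable (fun y ↦ ∫ x, K y x ∂p) m :=
  .of_bound (measurable_integral_kernel hKm p).aestronglyMeasurable B
    (ae_of_all _ (abs_integral_kernel_le p hKb))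

lemma abs_mmdWitness_le (hKb : ∀ x y, |K x y| ≤ B) (y : α) : |mmdWitness K p q y| ≤ 2 * B := by
  rw [mmdWitness, two_mul]
  exact (abs_sub _ _).trans
    (add_le_add (abs_integral_kernel_le p hKb y) (abs_integral_kernel_le q hKb y))

lemma sq_mmdWitness_le (hKm : Measurable (Function.uncurry K)) (hKb : ∀ x y, |K x y| ≤ B) (y : α) :
    mmdWitness K p q y ^ 2 ≤ 2 * ((∫ x, K y x ^ 2 ∂p) + ∫ x, K y x ^ 2 ∂q) := by
  have jensen (r : Measure α) [IsProbabilityMeasure r] :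
      (∫ x, K y x ∂r) ^ 2 ≤ ∫ x, K y x ^ 2 ∂r :=
    sq_integral_le_integral_sq <|
      .of_bound (hKm.comp measurable_prodMk_left).aestronglyMeasurable B (ae_of_all _ (hKb y))
  calc mmdWitness K p q y ^ 2 ≤ 2 * ((∫ x, K y x ∂p) ^ 2 + (∫ x, K y x ∂q) ^ 2) := by
        simpa [mmdWitness, sub_eq_add_neg] using
          add_sq_le (a := ∫ x, K y x ∂p) (b := -∫ x, K y x ∂q)
    _ ≤ _ := by gcongr <;> exact jensen _

lemma integral_sq_mmdWitness_le (hKm : Measurable (Function.uncurry K))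
    (hKb : ∀ x y, |K x y| ≤ B) :
    ∫ y, mmdWitness K p q y ^ 2 ∂m
      ≤ 2 * ((∫ y, ∫ x, K y x ^ 2 ∂p ∂m) + ∫ y, ∫ x, K y x ^ 2 ∂q ∂m) := by
  have int (r : Measure α) [IsProbabilityMeasure r] :
      Integrable (fun y ↦ ∫ x, K y x ^ 2 ∂r) m :=
    integrable_integral_kernel r m (hKm.pow_const 2) (fun x y ↦ abs_sq_le_sq (hKb x y))
  rw [← integral_add (int p) (int q), ← integral_const_mul]
  exact integral_mono_of_nonneg (ae_of_all _ fun y ↦ sq_nonneg _)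
    (((int p).add (int q)).const_mul 2) (ae_of_all _ (sq_mmdWitness_le p q hKm hKb))

lemma integral_integral_comm_of_symm (μ ρ : Measure α) [IsFiniteMeasure μ] [IsFiniteMeasure ρ]
    (hKm : Measurable (Function.uncurry K))
    (hKb : ∀ x y, |K x y| ≤ B) (hKs : ∀ x y, K x y = K y x) :
    ∫ x, ∫ y, K x y ∂μ ∂ρ = ∫ x, ∫ y, K x y ∂ρ ∂μ := by
  rw [integral_integral_swap (.of_bound hKm.aestronglyMeasurable B (ae_of_all _ fun z ↦ hKb _ _))]
  simp_rw [fun x y ↦ hKs y x]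

lemma integral_ntkWitness (hKm : Measurable (Function.uncurry K)) (hKb : ∀ x y, |K x y| ≤ B)
    (hKs : ∀ x y, K x y = K y x) {a b : ℕ} (dtr : (Fin a → α) × (Fin b → α)) :
    ∫ x, ntkWitness K a b dtr x ∂m
      = 𝔼 j, (∫ x, K (dtr.1 j) x ∂m) - 𝔼 j, ∫ x, K (dtr.2 j) x ∂m := by
  have int (y : α) : Integrable (fun x ↦ K y x) m :=
    .of_bound (hKm.comp measurable_prodMk_left).aestronglyMeasurable B (ae_of_all _ (hKb y))
  have int_sum {n : ℕ} (z : Fin n → α) :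
      Integrable (fun x ↦ (1 / (n : ℝ)) * ∑ j, K (z j) x) m :=
    (integrable_finsetSum _ fun j _ ↦ int (z j)).const_mul _
  simp_rw [ntkWitness, fun x y ↦ hKs x (dtr.1 y), fun x y ↦ hKs x (dtr.2 y)]
  rw [integral_sub (int_sum dtr.1) (int_sum dtr.2), integral_const_mul, integral_const_mul,
    integral_finsetSum _ fun j _ ↦ int _, integral_finsetSum _ fun j _ ↦ int _]
  simp_rw [Fintype.expect_eq_sum_div_card, Fintype.card_fin, one_div_mul_eq_div]

lemma condMeanC_eq_expect_mmdWitness (hKm : Measurable (Function.uncurry K))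
    (hKb : ∀ x y, |K x y| ≤ B) (hKs : ∀ x y, K x y = K y x) {a b : ℕ}
    (dtr : (Fin a → α) × (Fin b → α)) :
    condMeanC K a b p q dtr
      = 𝔼 j, mmdWitness K p q (dtr.1 j) - 𝔼 j, mmdWitness K p q (dtr.2 j) := by
  simp_rw [condMeanC, integral_ntkWitness _ hKm hKb hKs, mmdWitness, Finset.expect_sub_distrib]
  ring

lemma deltaK_eq_integral_mmdWitness (hKm : Measurable (Function.uncurry K))
    (hKb : ∀ x y, |K x y| ≤ B) (hKs : ∀ x y, K x y = K y x) :
    deltaK K p q = (∫ y, mmdWitness K p q y ∂p) - ∫ y, mmdWitness K p q y ∂q := by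
  have int (r m : Measure α) [IsProbabilityMeasure r] [IsProbabilityMeasure m] :
      Integrable (fun y ↦ ∫ x, K y x ∂r) m := integrable_integral_kernel r m hKm hKb
  simp_rw [mmdWitness]
  rw [integral_sub (int p p) (int q p), integral_sub (int p q) (int q q),
    integral_integral_comm_of_symm p q hKm hKb hKs, deltaK]
  ring

lemma integral_sq_mmdWitness_le_four_mul {ν : ℝ} (hKm : Measurable (Function.uncurry K))
    (hKb : ∀ x y, |K x y| ≤ B) (hm₁ : ∫ y, ∫ x, K y x ^ 2 ∂p ∂m ≤ ν)
    (hm₂ : ∫ y, ∫ x, K y x ^ 2 ∂q ∂m ≤ ν) :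
    ∫ y, mmdWitness K p q y ^ 2 ∂m ≤ 4 * ν := by
  linarith [integral_sq_mmdWitness_le p q m hKm hKb]

end Kernel

lemma exp_neg_four_ninths_mul_sq_le (t : ℝ) : exp (-(4 / 9) * t ^ 2) ≤ 4 * exp (-t ^ 2 / 4) := by
  linarith [exp_pos (-t ^ 2 / 4), exp_le_exp.mpr
    (show -(4 / 9) * t ^ 2 ≤ -t ^ 2 / 4 by linarith [sq_nonneg t])]

theorem condMean_concentration_general {α : Type*} [MeasurableSpace α] {K : α → α → ℝ} {B : ℝ}
    (hKm : Measurable (Function.uncurry K)) (hKs : ∀ x y, K x y = K y x)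
    (hKb : ∀ x y, |K x y| ≤ B) (p q : Measure α) [IsProbabilityMeasure p] [IsProbabilityMeasure q]
    {ν : ℝ} (hpp : ∫ x, ∫ y, K x y ^ 2 ∂p ∂p ≤ ν) (hpq : ∫ x, ∫ y, K x y ^ 2 ∂q ∂p ≤ ν)
    (hqq : ∫ x, ∫ y, K x y ^ 2 ∂q ∂q ≤ ν) {a b : ℕ} {N : ℝ} (ha : N ≤ a) (hb : N ≤ b)
    {lam : ℝ} (hlam₀ : 0 ≤ lam) (hlam : B * lam < 3 * √(ν * N)) :
    ((Measure.pi fun _ ↦ p).prod (Measure.pi fun _ ↦ q))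
        {dtr : (Fin a → α) × (Fin b → α) |
          4 * lam * √(ν / N) ≤ condMeanC K a b p q dtr - deltaK K p q}
      ≤ ENNReal.ofReal (exp (-(4 / 9) * lam ^ 2)) ∧
    ((Measure.pi fun _ ↦ p).prod (Measure.pi fun _ ↦ q))
        {dtr : (Fin a → α) × (Fin b → α) |
          condMeanC K a b p q dtr - deltaK K p q ≤ -(4 * lam * √(ν / N))}
      ≤ ENNReal.ofReal (exp (-(4 / 9) * lam ^ 2)) := by
  have prod_pos : 0 < ν * N := by
    obtain ⟨x⟩ := p.nonempty_of_neZero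
    have B_nonneg : 0 ≤ B := (abs_nonneg _).trans (hKb x x)
    exact sqrt_pos.mp (by linarith [mul_nonneg B_nonneg hlam₀])
  have ν_nonneg : 0 ≤ ν :=
    (integral_nonneg fun x ↦ integral_nonneg fun y ↦ sq_nonneg (K x y)).trans hpp
  have N_pos : 0 < N := pos_of_mul_pos_right prod_pos ν_nonneg
  have ν_pos : 0 < ν := pos_of_mul_pos_left prod_pos N_pos.le
  have hqp : ∫ x, ∫ y, K x y ^ 2 ∂p ∂q ≤ ν :=
    (integral_integral_comm_of_symm p q (hKm.pow_const 2) (fun x y ↦ abs_sq_le_sq (hKb x y))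
      fun x y ↦ by rw [hKs]).trans_le hpq
  have meas := measurable_mmdWitness hKm p q
  have bdd := abs_mmdWitness_le p q hKb
  have var_p := integral_sq_mmdWitness_le_four_mul p q p hKm hKb hpp hpq
  have var_q := integral_sq_mmdWitness_le_four_mul p q q hKm hKb hqp hqq
  have lam_range : 2 * B * lam ≤ 3 * √(4 * ν * N) := by
    rw [mul_assoc 4, sqrt_four_mul]
    linarith
  have threshold : 4 * lam * √(ν / N) = 2 * lam * √(4 * ν / N) := by
    rw [mul_div_assoc, sqrt_four_mul]
    ring
  simp_rw [threshold, condMeanC_eq_expect_mmdWitness p q hKm hKb hKs,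
    deltaK_eq_integral_mmdWitness p q hKm hKb hKs,
    ENNReal.le_ofReal_iff_toReal_le (measure_ne_top _ _) (exp_pos _).le]
  exact ⟨measureReal_expect_sub_expect_ge_le_exp_sq meas bdd N_pos (by simpa) (by simpa)
      (by positivity) var_p var_q hlam₀ lam_range,
    measureReal_expect_sub_expect_le_neg_le_exp_sq meas bdd N_pos (by simpa) (by simpa)
      (by positivity) var_p var_q hlam₀ lam_range⟩

/-- Lemma B.2: concentration of the conditional mean `Ĉ` around `δ_K`: for
`0 < λ₍₁₎ < 3√(νc_a n)`, each of the deviations `Ĉ − δ_K > 4λ₍₁₎√(ν/(c_a n))` and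
`Ĉ − δ_K < −4λ₍₁₎√(ν/(c_a n))` has `P₍₁₎`-probability at most `4e^{−λ₍₁₎²/4}`. -/
theorem condMean_concentration
    {d : ℕ} (𝒳 : Set (EuclideanSpace ℝ (Fin d))) (h𝒳 : MeasurableSet 𝒳)
    (K : 𝒳 → 𝒳 → ℝ)
    (hKmeas : Measurable (Function.uncurry K))
    (hKsym : ∀ x y, K x y = K y x)
    (hKpsd : ∀ (m : ℕ) (z : Fin m → 𝒳) (a : Fin m → ℝ),
      0 ≤ ∑ i, ∑ j, a i * a j * K (z i) (z j))
    (hKbdd : ∀ x y, |K x y| ≤ 1)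
    (p q : Measure 𝒳) [IsProbabilityMeasure p] [IsProbabilityMeasure q]
    (ν : ℝ) (hν1 : ν ≤ 1)
    (hνpp : ∫ x, ∫ y, (K x y)^2 ∂p ∂p ≤ ν)
    (hνpq : ∫ x, ∫ y, (K x y)^2 ∂q ∂p ≤ ν)
    (hνqq : ∫ x, ∫ y, (K x y)^2 ∂q ∂q ≤ ν)
    (n1X n1Y n : ℕ) (ca : ℝ) (hca : 0 < ca) (hca1 : ca < 1)
    (hbal1 : ca * (n : ℝ) ≤ (n1X : ℝ)) (hbal1' : (n1X : ℝ) ≤ (n : ℝ))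
    (hbal2 : ca * (n : ℝ) ≤ (n1Y : ℝ)) (hbal2' : (n1Y : ℝ) ≤ (n : ℝ))
    (lam1 : ℝ) (hlam1 : 0 < lam1)
    (hlam1' : lam1 < 3 * Real.sqrt (ν * ca * (n : ℝ))) :
    ((Measure.pi fun _ : Fin n1X => p).prod (Measure.pi fun _ : Fin n1Y => q))
        {dtr : (Fin n1X → 𝒳) × (Fin n1Y → 𝒳) |
          condMeanC K n1X n1Y p q dtr - deltaK K p q
            > 4 * lam1 * Real.sqrt (ν/(ca * (n : ℝ)))}
      ≤ ENNReal.ofReal (4 * Real.exp (-lam1^2 / 4)) ∧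
    ((Measure.pi fun _ : Fin n1X => p).prod (Measure.pi fun _ : Fin n1Y => q))
        {dtr : (Fin n1X → 𝒳) × (Fin n1Y → 𝒳) |
          condMeanC K n1X n1Y p q dtr - deltaK K p q
            < -(4 * lam1 * Real.sqrt (ν/(ca * (n : ℝ))))}
      ≤ ENNReal.ofReal (4 * Real.exp (-lam1^2 / 4)) := by
  have weaken := ENNReal.ofReal_le_ofReal (exp_neg_four_ninths_mul_sq_le lam1)
  exact (condMean_concentration_general hKmeas hKsym hKbdd p q hνpp hνpq hνqq hbal1 hbal2 hlam1.le
    (by rwa [one_mul, ← mul_assoc])).imp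
    (fun upper ↦ (measure_mono <| Set.ofPred_subset_ofPred.mpr fun _ ↦ le_of_lt).trans <|
      upper.trans weaken)
    (fun lower ↦ (measure_mono <| Set.ofPred_subset_ofPred.mpr fun _ ↦ le_of_lt).trans <|
      lower.trans weaken)
end
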